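/- Let 𝓗 ⊂ SL(2,ℝ)² be the set of pairs that are uniformly hyperbolic with respect to the full shift on two symbols, and suppose (A,B) lies on the frontier of 𝓗. Then at least one of the following holds: (1) some nonempty product of factors from {A,B} has trace of absolute value exactly 2; (2) both A and B are hyperbolic (|tr A| > 2 and |tr B| > 2) and there exist a nonzero vector v ∈ ℝ² and reals λ, μ with A v = λ v and B v = μ v such that either |λ| > 1 > |μ| or |μ| > 1 > |λ|. Moreover, alternative (2) can occur only if (A,B) belongs to the closure of H₀. -/

import Mathlib

/-!
Near a pair `(A, B)` in the closure of `𝓗` all products have `|tr| ≥ 2`, because a product with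
`|tr| < 2` has bounded powers and this is an open condition. So if no product is parabolic, all
satisfy `|tr| > 2`, and after changing signs `tr A, tr B > 2`. It remains to see that, unless `A`
and `B` share an eigenvector expanded by one and contracted by the other, `(A, B)` is an interior
point of `𝓗`. In an eigenbasis of `A` there are two cases (`straight_or_twisted`).

* Straight: there is a common strictly invariant cone (`exists_slopes`, `ConePos`). This is an open
  condition, and it gives exponential growth by following one vector of the cone
  (`UnifHypPair.of_conePos`).
* Twisted: `κ = (AB - BA)² > 0` and `2 tr AB < tr A tr B`. The moves `(A, B) ↦ (AB, B)` and
  `(A, B) ↦ (A, AB)` preserve `κ`, and the one replacing the larger trace decreases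
  `tr A + tr B + tr AB` by at least `2 √κ` as long as `tr AB > 2` (`mul_lt_of_kap_pos`,
  `two_sqrt_kap_le`). Since no product has trace in `[-2, 2]`, finitely many moves lead to
  `tr AB < -2` (`eventually_groupHyp`). There `A` and `B` are products of reflections in three
  disjoint geodesics, with normals `A f`, `f`, `f B` where `f = (AB - BA) / √κ`; ping-pong with the
  coefficients in this basis gives exponential growth along all reduced words of the free group
  (`ReflTriple.landed_word`, `groupHyp_of_traces`). Unlike uniform hyperbolicity, this growth can be
  pulled back through the moves, which are changes of free basis (`GroupHyp.of_basis_change`).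

For the last claim, let `A v = l v`, `B v = m v` with `|l| > 1 > |m|`. In an eigenbasis of `A`, with
`v` first, `B` is upper triangular; making its off-diagonal entry nonzero if necessary, conjugation
by a small lower triangular shear separates the attracting direction of `A` from the repelling
direction of `B`, on the side where the two matrices get a common invariant interval
(`mem_closure_H0_of_mixed`).
-/

open Matrix

noncomputable section

/-- `SL(2,ℝ)`. -/
abbrev SL2 := Matrix.SpecialLinearGroup (Fin 2) ℝ

/-- Operator norm of a `2 × 2` real matrix, induced by the Euclidean norm on `ℝ²`. -/
noncomputable def opNorm (A : Matrix (Fin 2) (Fin 2) ℝ) : ℝ :=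
  ‖Matrix.toEuclideanCLM (𝕜 := ℝ) A‖

/-- Trace of an element of `SL(2,ℝ)`. -/
def trace2 (A : SL2) : ℝ := Matrix.trace (A : Matrix (Fin 2) (Fin 2) ℝ)

/-- Topology on `SL(2,ℝ)` induced from the space of `2 × 2` real matrices. -/
instance : TopologicalSpace SL2 := instTopologicalSpaceSubtype

/-- The real projective line: quotient of `ℝ² ∖ {0}` by nonzero scalar multiplication. -/
abbrev P1 := Projectivization ℝ (Fin 2 → ℝ)

/-- The quotient topology on the real projective line. -/
instance : TopologicalSpace P1 := instTopologicalSpaceQuotient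

/-- The projective action of `SL(2,ℝ)` on the real projective line. -/
def projAct (A : SL2) : P1 → P1 :=
  Projectivization.map (Matrix.SpecialLinearGroup.toLin' A).toLinearMap
    (Matrix.SpecialLinearGroup.toLin' A).injective

/-- For a word `w = [i₁, …, iₙ]`, the product `A_{iₙ} ⋯ A_{i₁}`. -/
def wordProd {N : ℕ} (A : Fin N → SL2) (w : List (Fin N)) : SL2 :=
  (w.reverse.map A).prod

/-- Uniform hyperbolicity with respect to the full shift on `N` symbols:
every product of `n` matrices has operator norm at least `C·λⁿ`. -/
def UnifHyp {N : ℕ} (A : Fin N → SL2) : Prop :=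
  ∃ C > (0:ℝ), ∃ lam > (1:ℝ), ∀ w : List (Fin N), w ≠ [] →
    opNorm (wordProd A w : Matrix (Fin 2) (Fin 2) ℝ) ≥ C * lam ^ w.length

/-- Transitivity of the subshift of finite type given by the transition relation `T`:
any symbol can be joined to any other by an admissible word. -/
def TransitiveSubshift {N : ℕ} (T : Fin N → Fin N → Prop) : Prop :=
  ∀ α β : Fin N, ∃ w : List (Fin N), w ≠ [] ∧ w.Chain' T ∧
    w.head? = some α ∧ w.getLast? = some β

/-- Uniform hyperbolicity with respect to the subshift determined by the
transition relation `T`. -/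
def UnifHypSub {N : ℕ} (T : Fin N → Fin N → Prop) (A : Fin N → SL2) : Prop :=
  ∃ C > (0:ℝ), ∃ lam > (1:ℝ), ∀ w : List (Fin N), w ≠ [] → w.Chain' T →
    opNorm (wordProd A w : Matrix (Fin 2) (Fin 2) ℝ) ≥ C * lam ^ w.length

/-- For a word `w` in two letters (`true ↦ A`, `false ↦ B`), the corresponding
product of the matrices `A`, `B` (letters applied right-to-left). -/
def pairProd (A B : SL2) (w : List Bool) : SL2 :=
  (w.reverse.map fun b => if b then A else B).prod

/-- Uniform hyperbolicity of a pair `(A,B)` with respect to the full shift on two symbols. -/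
def UnifHypPair (A B : SL2) : Prop :=
  ∃ C > (0:ℝ), ∃ lam > (1:ℝ), ∀ w : List Bool, w ≠ [] →
    opNorm (pairProd A B w : Matrix (Fin 2) (Fin 2) ℝ) ≥ C * lam ^ w.length

/-- The hyperbolicity locus for the full shift on two symbols. -/
def UHpairs : Set (SL2 × SL2) := {p | UnifHypPair p.1 p.2}

/-- The set of pairs having an elliptic product. -/
def Epairs : Set (SL2 × SL2) :=
  {p | ∃ w : List Bool, w ≠ [] ∧ |trace2 (pairProd p.1 p.2 w)| < 2}

/-- An open interval in the projective line: a nonempty open connected subset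
whose complement contains more than one point. -/
def IsOpenInterval (I : Set P1) : Prop :=
  IsOpen I ∧ IsConnected I ∧ Iᶜ.Nontrivial

/-- `H₀`: pairs possessing a common strictly invariant open interval. -/
def H0 : Set (SL2 × SL2) :=
  {p | ∃ I : Set P1, IsOpenInterval I ∧
        projAct p.1 '' closure I ⊆ I ∧ projAct p.2 '' closure I ⊆ I}

/-- `H_id`: pairs with `|tr A| > 2`, `|tr B| > 2`, `|tr AB| > 2`, `tr A · tr B · tr AB < 0`. -/
def Hid : Set (SL2 × SL2) :=
  {p | 2 < |trace2 p.1| ∧ 2 < |trace2 p.2| ∧ 2 < |trace2 (p.1 * p.2)| ∧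
       trace2 p.1 * trace2 p.2 * trace2 (p.1 * p.2) < 0}

/-- `F₊(A,B) = (A, AB)`. -/
def Fplus (p : SL2 × SL2) : SL2 × SL2 := (p.1, p.1 * p.2)

/-- `F₋(A,B) = (BA, B)`. -/
def Fminus (p : SL2 × SL2) : SL2 × SL2 := (p.2 * p.1, p.2)

/-- `applySeq [ε₁, …, ε_k] = F_{ε_k} ∘ ⋯ ∘ F_{ε₁}`, where `true` stands for `+`
and `false` for `−`. -/
def applySeq (s : List Bool) (p : SL2 × SL2) : SL2 × SL2 :=
  s.foldl (fun q e => if e then Fplus q else Fminus q) p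

/-- A pair `(A,B)` is free if `|tr A| ≥ 2`, `|tr B| ≥ 2`, `|tr AB| ≥ 2` and
`tr A · tr B · tr AB < 0`. -/
def FreePair (p : SL2 × SL2) : Prop :=
  2 ≤ |trace2 p.1| ∧ 2 ≤ |trace2 p.2| ∧ 2 ≤ |trace2 (p.1 * p.2)| ∧
    trace2 p.1 * trace2 p.2 * trace2 (p.1 * p.2) < 0

/-- A pair is straight if it lies in the closure of `H₀`. -/
def Straight (p : SL2 × SL2) : Prop := p ∈ closure H0

/-- A pair `(A,B)` is twisted if `|tr A| ≥ 2`, `|tr B| ≥ 2` and it is not straight. -/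
def Twisted (p : SL2 × SL2) : Prop :=
  2 ≤ |trace2 p.1| ∧ 2 ≤ |trace2 p.2| ∧ ¬ Straight p

/-- A pair is almost hyperbolic if every image of it under the monoid generated by
`F₊`, `F₋` consists of two non-elliptic matrices. -/
def AlmostHyperbolic (p : SL2 × SL2) : Prop :=
  ∀ s : List Bool, 2 ≤ |trace2 (applySeq s p).1| ∧ 2 ≤ |trace2 (applySeq s p).2|

/-- Group-hyperbolicity of a pair: exponential growth over all reduced words
in the free group on two generators (`true ↦ A`, `false ↦ B`). -/
def GroupHyp (A B : SL2) : Prop :=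
  ∃ C > (0:ℝ), ∃ τ > (0:ℝ), ∀ g : FreeGroup Bool, g ≠ 1 →
    opNorm ((FreeGroup.lift (fun b => if b then A else B) g : SL2) :
        Matrix (Fin 2) (Fin 2) ℝ) ≥
      C * Real.exp (τ * (FreeGroup.toWord g).length)

/-- `M` has finitely many connected components, and distinct components have
disjoint closures. -/
def FinCompDisjClosures (M : Set P1) : Prop :=
  {C : Set P1 | ∃ x ∈ M, C = connectedComponentIn M x}.Finite ∧
    ∀ x ∈ M, ∀ y ∈ M, connectedComponentIn M x ≠ connectedComponentIn M y →
      closure (connectedComponentIn M x) ∩ closure (connectedComponentIn M y) = ∅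

end

/-- Real `2 × 2` matrices. -/
abbrev M2 := Matrix (Fin 2) (Fin 2) ℝ

/-! ### The operator norm -/

lemma opNorm_nonneg (X : M2) : 0 ≤ opNorm X := norm_nonneg _

lemma opNorm_mul_le (X Y : M2) : opNorm (X * Y) ≤ opNorm X * opNorm Y := by
  unfold opNorm; rw [map_mul]; exact norm_mul_le _ _

lemma opNorm_neg (X : M2) : opNorm (-X) = opNorm X := by
  unfold opNorm; rw [map_neg, norm_neg]

lemma opNorm_sub_le (X Y : M2) : opNorm (X - Y) ≤ opNorm X + opNorm Y := by
  unfold opNorm; rw [map_sub]; exact norm_sub_le _ _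

lemma opNorm_smul (r : ℝ) (X : M2) : opNorm (r • X) = |r| * opNorm X := by
  unfold opNorm; rw [map_smul, norm_smul, Real.norm_eq_abs]

lemma opNorm_transpose (X : M2) : opNorm Xᵀ = opNorm X := by
  have h : Xᵀ = star X := by
    rw [Matrix.star_eq_conjTranspose, Matrix.conjTranspose_eq_transpose_of_trivial]
  unfold opNorm; rw [h, map_star, ContinuousLinearMap.star_eq_adjoint, LinearIsometryEquiv.norm_map]

lemma abs_entry_le_opNorm (X : M2) (i j : Fin 2) : |X i j| ≤ opNorm X := by
  have h := (Matrix.toEuclideanCLM (𝕜 := ℝ) X).le_opNorm (EuclideanSpace.single j (1:ℝ))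
  have h2 := PiLp.norm_apply_le
    ((Matrix.toEuclideanCLM (𝕜 := ℝ) X) (EuclideanSpace.single j (1:ℝ))) i
  have h3 : ((Matrix.toEuclideanCLM (𝕜 := ℝ) X) (EuclideanSpace.single j (1:ℝ))) i = X i j := by
    rw [Matrix.ofLp_toEuclideanCLM]
    simp
  rw [h3] at h2
  simp only [PiLp.norm_single, norm_one, mul_one] at h
  exact h2.trans h

lemma abs_trace_le_opNorm (X : M2) : |X.trace| ≤ 2 * opNorm X := by
  have h0 := abs_entry_le_opNorm X 0 0
  have h1 := abs_entry_le_opNorm X 1 1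
  rw [Matrix.trace_fin_two]
  linarith [abs_add_le (X 0 0) (X 1 1)]

/-- In dimension two the adjugate is the transpose conjugated by a rotation, so inversion in
`SL(2,ℝ)` changes the norm by at most a constant factor. -/
lemma exists_opNorm_inv_le : ∃ K > 0, ∀ g : SL2,
    opNorm ((g⁻¹ : SL2) : M2) ≤ K * opNorm (g : M2) := by
  refine ⟨opNorm !![0, 1; -1, 0] * opNorm !![0, -1; 1, 0] + 1, by
    have := opNorm_nonneg !![0, 1; -1, 0]
    have := opNorm_nonneg !![0, -1; 1, 0]
    positivity, fun g => ?_⟩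
  have h : ((g⁻¹ : SL2) : M2) = !![0, 1; -1, 0] * (g : M2)ᵀ * !![0, -1; 1, 0] := by
    rw [Matrix.SpecialLinearGroup.coe_inv, Matrix.adjugate_fin_two]
    ext i j; fin_cases i <;> fin_cases j <;> simp [Matrix.mul_apply, Matrix.vecMul, dotProduct, Fin.sum_univ_two]
  rw [h]
  have h1 := opNorm_mul_le (!![0, 1; -1, 0] * (g : M2)ᵀ) !![0, -1; 1, 0]
  have h2 := opNorm_mul_le !![0, 1; -1, 0] (g : M2)ᵀ
  rw [opNorm_transpose] at h2
  have := opNorm_nonneg !![0, -1; 1, 0]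
  have := opNorm_nonneg (g : M2)
  nlinarith

/-! ### Words and uniform hyperbolicity -/

lemma pairProd_nil (A B : SL2) : pairProd A B [] = 1 := by simp [pairProd]

lemma pairProd_append (A B : SL2) (u v : List Bool) :
    pairProd A B (u ++ v) = pairProd A B v * pairProd A B u := by
  simp [pairProd]

lemma pairProd_cons (A B : SL2) (b : Bool) (v : List Bool) :
    pairProd A B (b :: v) = pairProd A B v * (if b then A else B) := by
  simp [pairProd]

lemma pairProd_replicate (A B : SL2) (w : List Bool) (n : ℕ) :
    pairProd A B (List.replicate n w).flatten = pairProd A B w ^ n := by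
  induction n with
  | zero => simp [pairProd_nil]
  | succ n ih => rw [List.replicate_succ, List.flatten_cons, pairProd_append, ih, pow_succ]

lemma SL2_det (g : SL2) : (g : M2) 0 0 * (g : M2) 1 1 - (g : M2) 0 1 * (g : M2) 1 0 = 1 := by
  have := g.det_coe
  rwa [Matrix.det_fin_two] at this

/-- Cayley–Hamilton for powers: the coefficients stay on a level curve of a quadratic form
which is definite as soon as `|tr P| < 2`. -/
lemma SL2_pow_eq (P : SL2) (n : ℕ) : ∃ s r : ℝ, ((P ^ n : SL2) : M2) = s • (P : M2) - r • 1 ∧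
    s ^ 2 - trace2 P * s * r + r ^ 2 = 1 := by
  induction n with
  | zero => exact ⟨0, -1, by simp, by norm_num⟩
  | succ n ih =>
    obtain ⟨s, r, h, hq⟩ := ih
    refine ⟨trace2 P * s - r, s, ?_, by linarith⟩
    have hd := SL2_det P
    rw [pow_succ, Matrix.SpecialLinearGroup.coe_mul, h]
    unfold trace2
    rw [Matrix.trace_fin_two]
    ext i j
    fin_cases i <;> fin_cases j <;>
      simp [Matrix.mul_apply, Fin.sum_univ_two, Matrix.sub_apply, Matrix.one_apply]
      <;> first | ring1 | linear_combination (-s) * hd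

lemma elliptic_pow_bounded (P : SL2) (h : |trace2 P| < 2) :
    ∃ K, ∀ n : ℕ, opNorm ((P ^ n : SL2) : M2) ≤ K := by
  have ht : 0 < 4 - trace2 P ^ 2 := by
    have := sq_lt_sq' (by linarith [abs_nonneg (trace2 P)]) h
    rw [sq_abs] at this; linarith
  set b := Real.sqrt (4 / (4 - trace2 P ^ 2)) with hb
  refine ⟨b * opNorm (P : M2) + b * opNorm 1, fun n => ?_⟩
  obtain ⟨s, r, hP, hq⟩ := SL2_pow_eq P n
  have hs : |s| ≤ b := by
    apply Real.abs_le_sqrt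
    rw [le_div_iff₀ ht]; nlinarith [sq_nonneg (trace2 P * s - 2 * r)]
  have hr : |r| ≤ b := by
    apply Real.abs_le_sqrt
    rw [le_div_iff₀ ht]; nlinarith [sq_nonneg (trace2 P * r - 2 * s)]
  rw [hP]
  refine (opNorm_sub_le _ _).trans ?_
  rw [opNorm_smul, opNorm_smul]
  gcongr
  · exact opNorm_nonneg _
  · exact opNorm_nonneg _

lemma UnifHypPair.two_le_abs_trace {A B : SL2} (h : UnifHypPair A B) {w : List Bool}
    (hw : w ≠ []) : 2 ≤ |trace2 (pairProd A B w)| := by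
  by_contra! hlt
  obtain ⟨K, hK⟩ := elliptic_pow_bounded _ hlt
  obtain ⟨C, hC, lam, hlam, hgrow⟩ := h
  have hl : 1 ≤ w.length := List.length_pos_iff.mpr hw
  obtain ⟨n, hn⟩ := pow_unbounded_of_one_lt (K / C) hlam
  have h1 := hgrow (List.replicate (n + 1) w).flatten (by
    rw [List.replicate_succ, List.flatten_cons]; simp [hw])
  rw [pairProd_replicate] at h1
  have h2 : lam ^ n ≤ lam ^ (List.replicate (n + 1) w).flatten.length := by
    apply pow_le_pow_right₀ hlam.le
    simp only [List.length_flatten, List.map_replicate, List.sum_replicate, smul_eq_mul]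
    nlinarith
  have h3 := hK (n + 1)
  rw [div_lt_iff₀ hC] at hn
  nlinarith

lemma trace2_pairProd_continuous (w : List Bool) :
    Continuous fun p : SL2 × SL2 => trace2 (pairProd p.1 p.2 w) := by
  have h : Continuous fun p : SL2 × SL2 => (pairProd p.1 p.2 w : M2) := by
    induction w with
    | nil => simp only [pairProd_nil]; exact continuous_const
    | cons b v ih =>
      simp only [pairProd_cons, Matrix.SpecialLinearGroup.coe_mul]
      refine ih.mul ?_
      cases b
      · exact continuous_subtype_val.comp continuous_snd
      · exact continuous_subtype_val.comp continuous_fst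
  exact h.matrix_trace

lemma two_le_abs_trace_of_mem_closure {A B : SL2} (h : (A, B) ∈ closure UHpairs) {w : List Bool}
    (hw : w ≠ []) : 2 ≤ |trace2 (pairProd A B w)| := by
  have hc : IsClosed {p : SL2 × SL2 | 2 ≤ |trace2 (pairProd p.1 p.2 w)|} :=
    isClosed_le continuous_const (trace2_pairProd_continuous w).abs
  exact closure_minimal (fun p hp => UnifHypPair.two_le_abs_trace hp hw) hc h

lemma pairProd_of_sign {A B A' B' : SL2} (hA : A' = A ∨ A' = -A) (hB : B' = B ∨ B' = -B)
    (w : List Bool) : pairProd A' B' w = pairProd A B w ∨ pairProd A' B' w = -pairProd A B w := by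
  induction w with
  | nil => simp [pairProd_nil]
  | cons b v ih =>
    have hl : (if b then A' else B') = (if b then A else B) ∨
        (if b then A' else B') = -(if b then A else B) := by cases b <;> simpa
    simp only [pairProd_cons]
    rcases ih with ih | ih <;> rcases hl with hl | hl <;> rw [ih, hl] <;>
      simp only [neg_mul, mul_neg, neg_neg, true_or, or_true]

/-- Uniform hyperbolicity does not see the signs of the two matrices. -/
lemma UnifHypPair.of_sign {A B A' B' : SL2} (hA : A' = A ∨ A' = -A) (hB : B' = B ∨ B' = -B)
    (h : UnifHypPair A' B') : UnifHypPair A B := by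
  obtain ⟨C, hC, lam, hlam, hgrow⟩ := h
  refine ⟨C, hC, lam, hlam, fun w hw => ?_⟩
  have h1 := hgrow w hw
  rcases pairProd_of_sign hA hB w with h2 | h2
  · rwa [h2] at h1
  · rw [h2, Matrix.SpecialLinearGroup.coe_neg, opNorm_neg] at h1
    exact h1

/-! ### Invariant cones -/

/-- In the basis given by the columns of `G` (with inverse `G'`), the matrix `M` has entries all of
the same strict sign: it maps the closed double cone spanned by the two columns into the interior
of that double cone. -/
def ConePos (G G' M : M2) : Prop :=
  0 < (G' * M * G) 0 0 * (G' * M * G) 1 0 ∧ 0 < (G' * M * G) 0 1 * (G' * M * G) 1 1 ∧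
    0 < (G' * M * G) 0 1 * (G' * M * G) 1 0

lemma ConePos.of_neg {G G' M : M2} (h : ConePos G G' (-M)) : ConePos G G' M := by
  simpa [ConePos] using h

lemma isOpen_conePos (G G' : M2) : IsOpen {M : M2 | ConePos G G' M} := by
  have h (i j : Fin 2) : Continuous fun M : M2 => (G' * M * G) i j :=
    ((continuous_const.matrix_mul continuous_id).matrix_mul continuous_const).matrix_elem i j
  exact (isOpen_lt continuous_const ((h 0 0).mul (h 1 0))).inter
    ((isOpen_lt continuous_const ((h 0 1).mul (h 1 1))).inter
      (isOpen_lt continuous_const ((h 0 1).mul (h 1 0))))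

lemma conj_det {G G' : M2} (hG : G * G' = 1) (M : SL2) :
    (G' * (M : M2) * G) 0 0 * (G' * (M : M2) * G) 1 1
      - (G' * (M : M2) * G) 0 1 * (G' * (M : M2) * G) 1 0 = 1 := by
  rw [← Matrix.det_fin_two, Matrix.det_mul, Matrix.det_mul, M.det_coe, mul_one, mul_comm,
    ← Matrix.det_mul, hG, Matrix.det_one]

/-- The product of the two cone coordinates grows by a definite factor: the cross term gains
`n₀₀ n₁₁ + n₀₁ n₁₀ = 1 + 2 n₀₁ n₁₀`. -/
lemma cone_growth {a b c d x y δ : ℝ} (hdet : a * d - b * c = 1) (h1 : 0 < a * c) (h2 : 0 < b * d)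
    (hδ : δ ≤ 2 * (b * c)) (hxy : 0 ≤ x * y) :
    (1 + δ) * (x * y) ≤ (a * x + b * y) * (c * x + d * y) := by
  have h3 := mul_nonneg h1.le (sq_nonneg x)
  have h4 := mul_nonneg h2.le (sq_nonneg y)
  have h5 := mul_le_mul_of_nonneg_right hδ hxy
  have h6 : (a * x + b * y) * (c * x + d * y) =
      a * c * x ^ 2 + b * d * y ^ 2 + (1 + 2 * (b * c)) * (x * y) := by
    linear_combination (x * y) * hdet
  rw [h6]; linarith

/-- Two matrices strictly preserving a common double cone form a uniformly hyperbolic pair. -/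
lemma UnifHypPair.of_conePos {G G' : M2} (hG : G * G' = 1) {A B : SL2}
    (hA : ConePos G G' A) (hB : ConePos G G' B) : UnifHypPair A B := by
  obtain ⟨hA1, hA2, hA3⟩ := hA
  obtain ⟨hB1, hB2, hB3⟩ := hB
  set NA := G' * (A : M2) * G with hNA
  set NB := G' * (B : M2) * G with hNB
  set δ := min (2 * (NA 0 1 * NA 1 0)) (2 * (NB 0 1 * NB 1 0)) with hδ
  have hδ0 : 0 < δ := lt_min (by linarith) (by linarith)
  have hG2 : G' * G = 1 := mul_eq_one_comm.mp hG
  -- follow the orbit of the vector with cone coordinates `(1,1)`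
  have key : ∀ w : List Bool, (1 + δ) ^ w.length ≤
      ((G' * (pairProd A B w : M2) * G) 0 0 + (G' * (pairProd A B w : M2) * G) 0 1) *
      ((G' * (pairProd A B w : M2) * G) 1 0 + (G' * (pairProd A B w : M2) * G) 1 1) := by
    intro w
    induction w using List.reverseRecOn with
    | nil => simp [pairProd_nil, hG2]
    | append_singleton w b ih =>
      rw [pairProd_append, pairProd_cons, pairProd_nil, one_mul, List.length_append,
        List.length_singleton, pow_succ]
      set P := pairProd A B w
      set x := (G' * (P : M2) * G) 0 0 + (G' * (P : M2) * G) 0 1 with hx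
      set y := (G' * (P : M2) * G) 1 0 + (G' * (P : M2) * G) 1 1 with hy
      have h0 : 0 ≤ x * y := le_trans (by positivity) ih
      have hm (M : SL2) (i : Fin 2) : (G' * ((M * P : SL2) : M2) * G) i 0 +
          (G' * ((M * P : SL2) : M2) * G) i 1 =
          (G' * (M : M2) * G) i 0 * x + (G' * (M : M2) * G) i 1 * y := by
        have : G' * ((M * P : SL2) : M2) * G = (G' * (M : M2) * G) * (G' * (P : M2) * G) := by
          rw [Matrix.SpecialLinearGroup.coe_mul]
          calc G' * ((M : M2) * P) * G = G' * M * 1 * (P * G) := by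
                simp only [mul_one, mul_assoc]
            _ = _ := by rw [← hG]; simp only [mul_assoc]
        rw [this, Matrix.mul_apply, Matrix.mul_apply, Fin.sum_univ_two, Fin.sum_univ_two, hx, hy]
        ring
      have hstep : (1 + δ) ^ w.length * (1 + δ) ≤ (1 + δ) * (x * y) := by
        rw [mul_comm]; gcongr
      refine hstep.trans ?_
      cases b
      · simp only [Bool.false_eq_true, if_false, hm]
        exact cone_growth (conj_det hG B) hB1 hB2 (min_le_right _ _) h0
      · simp only [if_true, hm]
        exact cone_growth (conj_det hG A) hA1 hA2 (min_le_left _ _) h0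
  set k := opNorm G' * opNorm G + 1 with hk
  have hk0 : 0 < k := by
    have := opNorm_nonneg G; have := opNorm_nonneg G'; positivity
  refine ⟨1 / (2 * k), by positivity, Real.sqrt (1 + δ),
    Real.lt_sqrt_of_sq_lt (by linarith), fun w _ => ?_⟩
  set P := pairProd A B w
  have hP0 := opNorm_nonneg (P : M2)
  have hPk : opNorm (G' * (P : M2) * G) ≤ k * opNorm (P : M2) := by
    have h1 := opNorm_mul_le (G' * (P : M2)) G
    have h2 := opNorm_mul_le G' (P : M2)
    have := opNorm_nonneg G
    nlinarith
  have hsum : ∀ i, |(G' * (P : M2) * G) i 0 + (G' * (P : M2) * G) i 1| ≤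
      2 * (k * opNorm (P : M2)) := fun i => by
    have h1 := abs_entry_le_opNorm (G' * (P : M2) * G) i 0
    have h2 := abs_entry_le_opNorm (G' * (P : M2) * G) i 1
    linarith [abs_add_le ((G' * (P : M2) * G) i 0) ((G' * (P : M2) * G) i 1)]
  have hfin : Real.sqrt (1 + δ) ^ w.length ≤ 2 * (k * opNorm (P : M2)) := by
    have h4 : (Real.sqrt (1 + δ) ^ w.length) ^ 2 ≤ (2 * (k * opNorm (P : M2))) ^ 2 := by
      rw [← pow_mul, mul_comm, pow_mul, Real.sq_sqrt (by linarith)]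
      refine (key w).trans ((le_abs_self _).trans ?_)
      rw [abs_mul, sq]
      exact mul_le_mul (hsum 0) (hsum 1) (abs_nonneg _) (by positivity)
    exact le_of_sq_le_sq h4 (by positivity)
  rw [ge_iff_le, one_div, inv_mul_le_iff₀ (by positivity)]
  linarith

/-! ### Invariant intervals of the projective line -/

/-- The product of the two coordinates of `v` in the basis given by the columns of `G'⁻¹`. -/
def coneForm (G' : M2) (v : Fin 2 → ℝ) : ℝ := (G'.mulVec v) 0 * (G'.mulVec v) 1

lemma coneForm_smul (G' : M2) (r : ℝ) (v : Fin 2 → ℝ) :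
    coneForm G' (r • v) = r ^ 2 * coneForm G' v := by
  simp [coneForm, Matrix.mulVec_smul]; ring

lemma continuous_coneForm (G' : M2) : Continuous (coneForm G') := by
  have h : Continuous fun v : Fin 2 → ℝ => G'.mulVec v := continuous_const.matrix_mulVec continuous_id
  exact ((continuous_apply 0).comp h).mul ((continuous_apply 1).comp h)

lemma coneForm_rep (G' : M2) (v : Fin 2 → ℝ) (hv : v ≠ 0) :
    ∃ r : ℝ, r ≠ 0 ∧ coneForm G' (Projectivization.mk ℝ v hv).rep = r ^ 2 * coneForm G' v := by
  obtain ⟨a, ha⟩ := Projectivization.exists_smul_eq_mk_rep ℝ v hv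
  refine ⟨a, a.ne_zero, ?_⟩
  rw [← ha, ← coneForm_smul]; rfl

lemma coneForm_rep_pos (G' : M2) (v : Fin 2 → ℝ) (hv : v ≠ 0) :
    0 < coneForm G' (Projectivization.mk ℝ v hv).rep ↔ 0 < coneForm G' v := by
  obtain ⟨r, hr, h⟩ := coneForm_rep G' v hv
  rw [h]; exact mul_pos_iff_of_pos_left (by positivity)

lemma coneForm_rep_nonneg (G' : M2) (v : Fin 2 → ℝ) (hv : v ≠ 0) :
    0 ≤ coneForm G' (Projectivization.mk ℝ v hv).rep ↔ 0 ≤ coneForm G' v := by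
  obtain ⟨r, hr, h⟩ := coneForm_rep G' v hv
  rw [h]; exact mul_nonneg_iff_of_pos_left (by positivity)

/-- The interval of `ℙ¹` of lines lying in the open double cone. -/
def coneInterval (G' : M2) : Set P1 := {x | 0 < coneForm G' x.rep}

lemma isOpen_coneInterval (G' : M2) : IsOpen (coneInterval G') := by
  have h : IsOpen {v : {v : Fin 2 → ℝ // v ≠ 0} | 0 < coneForm G' v} :=
    isOpen_lt continuous_const ((continuous_coneForm G').comp continuous_subtype_val)
  refine isOpen_coinduced.mpr ?_
  convert h using 1
  ext v
  exact coneForm_rep_pos G' v.1 v.2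

lemma closure_coneInterval_subset (G' : M2) :
    closure (coneInterval G') ⊆ {x | 0 ≤ coneForm G' x.rep} := by
  refine closure_minimal (fun x (hx : 0 < coneForm G' x.rep) => hx.le) ?_
  have h : IsClosed {v : {v : Fin 2 → ℝ // v ≠ 0} | 0 ≤ coneForm G' v} :=
    isClosed_le continuous_const ((continuous_coneForm G').comp continuous_subtype_val)
  refine isClosed_coinduced.mpr ?_
  convert h using 1
  ext v
  exact coneForm_rep_nonneg G' v.1 v.2

lemma isOpenInterval_coneInterval {G G' : M2} (hG : G * G' = 1) :
    IsOpenInterval (coneInterval G') := by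
  have hG2 : G' * G = 1 := mul_eq_one_comm.mp hG
  have hGG (v : Fin 2 → ℝ) : G'.mulVec (G.mulVec v) = v := by
    rw [Matrix.mulVec_mulVec, hG2, Matrix.one_mulVec]
  have hGG2 (v : Fin 2 → ℝ) : G.mulVec (G'.mulVec v) = v := by
    rw [Matrix.mulVec_mulVec, hG, Matrix.one_mulVec]
  have hne (v : Fin 2 → ℝ) (hv : v ≠ 0) : G.mulVec v ≠ 0 := fun h => hv (by
    rw [← hGG v, h, Matrix.mulVec_zero])
  refine ⟨isOpen_coneInterval G', ?_, ?_⟩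
  · -- the interval is the image of the half-line of positive slopes
    have hv (t : ℝ) : (![1, t] : Fin 2 → ℝ) ≠ 0 := fun h => by simpa using congrFun h 0
    have hcont : Continuous fun t : ℝ => (Projectivization.mk ℝ (G.mulVec ![1, t])
        (hne _ (hv t)) : P1) := by
      have hq : Continuous (fun v : {v : Fin 2 → ℝ // v ≠ 0} =>
          (Projectivization.mk ℝ v.1 v.2 : P1)) := continuous_coinduced_rng
      have hf : Continuous fun t : ℝ => G.mulVec ![1, t] := by
        refine continuous_const.matrix_mulVec (continuous_pi fun i => ?_)
        fin_cases i
        · exact continuous_const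
        · exact continuous_id
      exact hq.comp (hf.subtype_mk fun t => hne _ (hv t))
    have him : coneInterval G' = (fun t : ℝ => (Projectivization.mk ℝ (G.mulVec ![1, t])
        (hne _ (hv t)) : P1)) '' Set.Ioi 0 := by
      ext x
      induction x using Projectivization.ind with
      | h v hv0 =>
        constructor
        · intro hx
          have hx' : 0 < coneForm G' v := (coneForm_rep_pos G' v hv0).mp hx
          have h0 : (G'.mulVec v) 0 ≠ 0 := fun h => by simp [coneForm, h] at hx'
          refine ⟨(G'.mulVec v) 1 / (G'.mulVec v) 0, ?_, ?_⟩
          · have : (G'.mulVec v) 1 / (G'.mulVec v) 0 = coneForm G' v / (G'.mulVec v) 0 ^ 2 := by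
              unfold coneForm; field_simp
            rw [this]; exact div_pos hx' (by positivity)
          · refine (Projectivization.mk_eq_mk_iff' ℝ _ _ _ _).mpr ⟨((G'.mulVec v) 0)⁻¹, ?_⟩
            rw [show ((G'.mulVec v) 0)⁻¹ • v = ((G'.mulVec v) 0)⁻¹ • G.mulVec (G'.mulVec v) by
              rw [hGG2], ← Matrix.mulVec_smul]
            congr 1
            generalize G'.mulVec v = u at h0
            ext i; fin_cases i
            · simp [h0]
            · simp; ring
        · rintro ⟨t, ht, hx⟩
          rw [← hx]
          refine (coneForm_rep_pos G' _ _).mpr ?_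
          unfold coneForm
          rw [hGG]
          simpa using ht
    rw [him]
    exact isConnected_Ioi.image _ hcont.continuousOn
  · have h10 : (![1, 0] : Fin 2 → ℝ) ≠ 0 := fun h => by simpa using congrFun h 0
    have h01 : (![0, 1] : Fin 2 → ℝ) ≠ 0 := fun h => by simpa using congrFun h 1
    refine ⟨Projectivization.mk ℝ _ (hne _ h10), ?_, Projectivization.mk ℝ _ (hne _ h01), ?_, ?_⟩
    · intro h
      have := (coneForm_rep_pos G' _ _).mp h
      unfold coneForm at this
      rw [hGG] at this
      simp at this
    · intro h
      have := (coneForm_rep_pos G' _ _).mp h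
      unfold coneForm at this
      rw [hGG] at this
      simp at this
    · intro h
      obtain ⟨a, ha⟩ := (Projectivization.mk_eq_mk_iff' ℝ _ _ _ _).mp h
      have h2 := congrArg G'.mulVec ha
      rw [Matrix.mulVec_smul, hGG, hGG] at h2
      simpa using congrFun h2 0

lemma projAct_mapsTo {G G' : M2} (hG : G * G' = 1) {M : SL2} (hM : ConePos G G' M) :
    projAct M '' closure (coneInterval G') ⊆ coneInterval G' := by
  rintro _ ⟨x, hx, rfl⟩
  have hx' := closure_coneInterval_subset G' hx
  induction x using Projectivization.ind with
  | h v hv0 =>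
    have hv : 0 ≤ coneForm G' v := (coneForm_rep_nonneg G' v hv0).mp hx'
    refine (coneForm_rep_pos G' _ _).mpr ?_
    obtain ⟨h1, h2, h3⟩ := hM
    have hdet := conj_det hG M
    have hGv : G.mulVec (G'.mulVec v) = v := by
      rw [Matrix.mulVec_mulVec, hG, Matrix.one_mulVec]
    have hMv : G'.mulVec ((M : M2).mulVec v) = (G' * (M : M2) * G).mulVec (G'.mulVec v) := by
      conv_lhs => rw [← hGv]
      simp only [Matrix.mulVec_mulVec, mul_assoc]
    have hne : G'.mulVec v ≠ 0 := fun h => hv0 (by rw [← hGv, h, Matrix.mulVec_zero])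
    change 0 < coneForm G' ((M : M2).mulVec v)
    unfold coneForm at hv ⊢
    rw [hMv]
    set N := G' * (M : M2) * G
    set u := G'.mulVec v
    have e (i : Fin 2) : N.mulVec u i = N i 0 * u 0 + N i 1 * u 1 := by
      simp [Matrix.mulVec, dotProduct, Fin.sum_univ_two]
    rw [e, e]
    have h6 : (N 0 0 * u 0 + N 0 1 * u 1) * (N 1 0 * u 0 + N 1 1 * u 1) =
      N 0 0 * N 1 0 * u 0 ^ 2 + N 0 1 * N 1 1 * u 1 ^ 2
        + (1 + 2 * (N 0 1 * N 1 0)) * (u 0 * u 1) := by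
      linear_combination (u 0 * u 1) * hdet
    rw [h6]
    have h7 : 0 ≤ (1 + 2 * (N 0 1 * N 1 0)) * (u 0 * u 1) := by positivity
    by_cases h0 : u 0 = 0
    · have h1' : u 1 ≠ 0 := fun h => hne (by ext i; fin_cases i <;> assumption)
      have : 0 < N 0 1 * N 1 1 * u 1 ^ 2 := by positivity
      have : 0 ≤ N 0 0 * N 1 0 * u 0 ^ 2 := by positivity
      linarith
    · have : 0 ≤ N 0 1 * N 1 1 * u 1 ^ 2 := by positivity
      have : 0 < N 0 0 * N 1 0 * u 0 ^ 2 := by positivity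
      linarith

lemma mem_H0_of_conePos {G G' : M2} (hG : G * G' = 1) {A B : SL2}
    (hA : ConePos G G' A) (hB : ConePos G G' B) : (A, B) ∈ H0 :=
  ⟨coneInterval G', isOpenInterval_coneInterval hG, projAct_mapsTo hG hA, projAct_mapsTo hG hB⟩

/-! ### Cones described by slopes -/

/-- The basis `(1,p)`, `(1,q)` spanning the cone of slopes between `p` and `q`. -/
def slopeMat (p q : ℝ) : M2 := !![1, 1; p, q]

/-- The inverse of `slopeMat p q` for `p ≠ q`. -/
noncomputable def slopeMatInv (p q : ℝ) : M2 := (q - p)⁻¹ • !![q, -1; -p, 1]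

lemma slopeMat_mul_inv {p q : ℝ} (h : p < q) : slopeMat p q * slopeMatInv p q = 1 := by
  have : q - p ≠ 0 := by linarith
  have e : (!![1, 1; p, q] : M2) * !![q, -1; -p, 1] = (q - p) • 1 := by
    rw [Matrix.mul_fin_two, Matrix.one_fin_two]
    ext i j; fin_cases i <;> fin_cases j <;> simp <;> ring
  rw [slopeMat, slopeMatInv, Matrix.mul_smul, e, smul_smul, inv_mul_cancel₀ this, one_smul]

/-- A matrix acts on slopes by `t ↦ (c + d t) / (a + b t)`; it is enough to test the endpoints of
an interval of slopes. -/
lemma ConePos.of_slopes {a b c d p q : ℝ} (hpq : p < q) (hdet : a * d - b * c = 1)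
    (hp0 : 0 < a + b * p) (hq0 : 0 < a + b * q) (hp : p * (a + b * p) < c + d * p)
    (hq : c + d * q < q * (a + b * q)) :
    ConePos (slopeMat p q) (slopeMatInv p q) !![a, b; c, d] := by
  have hr : 0 < (q - p)⁻¹ := inv_pos.mpr (by linarith)
  have e : slopeMatInv p q * !![a, b; c, d] * slopeMat p q = (q - p)⁻¹ •
      !![q * (a + b * p) - (c + d * p), q * (a + b * q) - (c + d * q);
         c + d * p - p * (a + b * p), c + d * q - p * (a + b * q)] := by
    unfold slopeMat slopeMatInv
    rw [Matrix.smul_mul, Matrix.smul_mul]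
    congr 1
    rw [Matrix.mul_fin_two, Matrix.mul_fin_two]
    ext i j; fin_cases i <;> fin_cases j <;> simp <;> ring
  -- monotonicity of the action on slopes: `f(q) - f(p) = (q - p) / ((a + b p) (a + b q))`
  have hmono : (c + d * q) * (a + b * p) - (c + d * p) * (a + b * q) = q - p := by
    linear_combination (q - p) * hdet
  have h00 : c + d * p < q * (a + b * p) := by
    by_contra! hcon
    nlinarith [mul_le_mul_of_nonneg_right hcon hq0.le, mul_lt_mul_of_pos_right hq hp0]
  have h11 : p * (a + b * q) < c + d * q := by
    by_contra! hcon
    nlinarith [mul_le_mul_of_nonneg_right hcon hp0.le, mul_lt_mul_of_pos_right hp hq0]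
  unfold ConePos
  rw [e]
  simp only [Matrix.smul_apply, smul_eq_mul, Matrix.of_apply, Matrix.cons_val', Matrix.cons_val_zero,
    Matrix.cons_val_one, Matrix.cons_val_fin_one]
  refine ⟨mul_pos (mul_pos hr ?_) (mul_pos hr ?_), mul_pos (mul_pos hr ?_) (mul_pos hr ?_),
    mul_pos (mul_pos hr ?_) (mul_pos hr ?_)⟩ <;> linarith

lemma ConePos.change_basis {G G' H H' M : M2} (h : ConePos G G' (H' * M * H)) :
    ConePos (H * G) (G' * H') M := by
  have e : G' * H' * M * (H * G) = G' * (H' * M * H) * G := by simp only [mul_assoc]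
  unfold ConePos at h ⊢
  rwa [e]

/-! ### Eigenbases -/

lemma det_sub_smul_one (A : SL2) (x : ℝ) :
    ((A : M2) - x • (1 : M2)).det = x ^ 2 - trace2 A * x + 1 := by
  have hd := SL2_det A
  unfold trace2
  rw [Matrix.det_fin_two, Matrix.trace_fin_two]
  simp
  linear_combination hd

lemma exists_eigenvector_iff (A : SL2) (x : ℝ) :
    (∃ v : Fin 2 → ℝ, v ≠ 0 ∧ (A : M2).mulVec v = x • v) ↔ x ^ 2 - trace2 A * x + 1 = 0 := by
  rw [← det_sub_smul_one, ← Matrix.exists_mulVec_eq_zero_iff]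
  simp only [Matrix.sub_mulVec, Matrix.smul_mulVec, Matrix.one_mulVec, sub_eq_zero]

/-- An eigenvector of `A ∈ SL(2,ℝ)` with eigenvalue `l ≠ ±1` is the first vector of an
eigenbasis, here the columns of `H`. -/
lemma exists_eigenbasis {A : SL2} {v : Fin 2 → ℝ} {l : ℝ} (hv : v ≠ 0)
    (hl : (A : M2).mulVec v = l • v) (hl1 : l ^ 2 ≠ 1) :
    ∃ H H' : M2, H * H' = 1 ∧ H' * (A : M2) * H = !![l, 0; 0, l⁻¹] ∧
      H.mulVec ![1, 0] = v := by
  have hroot := (exists_eigenvector_iff A l).mp ⟨v, hv, hl⟩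
  have hl0 : l ≠ 0 := fun h => by simp [h] at hroot
  obtain ⟨w, hw, hAw⟩ := (exists_eigenvector_iff A l⁻¹).mpr (by
    field_simp; linarith)
  have hne : l ≠ l⁻¹ := fun h => hl1 (by
    calc l ^ 2 = l * l⁻¹ := by rw [← h, sq]
      _ = 1 := mul_inv_cancel₀ hl0)
  set H : M2 := !![v 0, w 0; v 1, w 1] with hH
  have h1 : H.mulVec ![1, 0] = v := by
    ext i; fin_cases i <;> simp [hH]
  have h2 : H.mulVec ![0, 1] = w := by
    ext i; fin_cases i <;> simp [hH]
  have hdet : H.det ≠ 0 := by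
    intro h0
    obtain ⟨u, hu, hHu⟩ := Matrix.exists_mulVec_eq_zero_iff.mpr h0
    have hc : H.mulVec u = u 0 • v + u 1 • w := by
      ext i; fin_cases i <;> simp [hH, Matrix.mulVec, dotProduct, Fin.sum_univ_two] <;> ring
    rw [hc] at hHu
    have hc2 := congrArg (A : M2).mulVec hHu
    rw [Matrix.mulVec_add, Matrix.mulVec_smul, Matrix.mulVec_smul, hl, hAw,
      Matrix.mulVec_zero] at hc2
    have e0 : (u 0 * (l - l⁻¹)) • v = 0 := by
      have : (u 0 * (l - l⁻¹)) • v = (u 0 • l • v + u 1 • l⁻¹ • w) - l⁻¹ • (u 0 • v + u 1 • w) := by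
        module
      rw [this, hc2, hHu]; simp
    have e1 : (u 1 * (l - l⁻¹)) • w = 0 := by
      have : (u 1 * (l - l⁻¹)) • w = l • (u 0 • v + u 1 • w) - (u 0 • l • v + u 1 • l⁻¹ • w) := by
        module
      rw [this, hc2, hHu]; simp
    have hs : l - l⁻¹ ≠ 0 := sub_ne_zero.mpr hne
    refine hu ?_
    ext i; fin_cases i
    · simpa [hv, hs] using e0
    · simpa [hw, hs] using e1
  have hHH : H * H⁻¹ = 1 := Matrix.mul_nonsing_inv _ (by simpa using hdet)
  have hHH2 : H⁻¹ * H = 1 := Matrix.nonsing_inv_mul _ (by simpa using hdet)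
  refine ⟨H, H⁻¹, hHH, ?_, h1⟩
  have hAH : (A : M2) * H = H * !![l, 0; 0, l⁻¹] := by
    ext i j
    fin_cases j
    · have := congrFun hl i
      simp [Matrix.mulVec, dotProduct, Fin.sum_univ_two] at this
      fin_cases i <;> simp [hH, Matrix.mul_apply, Fin.sum_univ_two] at this ⊢ <;> linarith
    · have := congrFun hAw i
      simp [Matrix.mulVec, dotProduct, Fin.sum_univ_two] at this
      fin_cases i <;> simp [hH, Matrix.mul_apply, Fin.sum_univ_two] at this ⊢ <;> linarith
  rw [mul_assoc, hAH, ← mul_assoc, hHH2, one_mul]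

lemma exists_diagonalization {A : SL2} (h : 2 < trace2 A) :
    ∃ (H H' : M2) (l : ℝ), 1 < l ∧ H * H' = 1 ∧ H' * (A : M2) * H = !![l, 0; 0, l⁻¹] := by
  set t := trace2 A with ht
  set s := Real.sqrt (t ^ 2 - 4) with hs
  have hs2 : s ^ 2 = t ^ 2 - 4 := Real.sq_sqrt (by nlinarith)
  have hs0 : 0 ≤ s := Real.sqrt_nonneg _
  have hl : 1 < (t + s) / 2 := by linarith
  obtain ⟨v, hv, hAv⟩ := (exists_eigenvector_iff A ((t + s) / 2)).mpr (by
    rw [← ht]; linear_combination hs2 / 4)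
  obtain ⟨H, H', h1, h2, -⟩ := exists_eigenbasis hv hAv (by nlinarith)
  exact ⟨H, H', _, hl, h1, h2⟩

lemma ConePos.diag {l p q : ℝ} (hl : 1 < |l|) (hp : p < 0) (hq : 0 < q) :
    ConePos (slopeMat p q) (slopeMatInv p q) !![l, 0; 0, l⁻¹] := by
  have key : ∀ l : ℝ, 1 < l → ConePos (slopeMat p q) (slopeMatInv p q) !![l, 0; 0, l⁻¹] := by
    intro l hl
    have h1 : l⁻¹ < 1 := inv_lt_one_of_one_lt₀ hl
    apply ConePos.of_slopes (by linarith)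
    · have : l ≠ 0 := by linarith
      simp [this]
    · linarith
    · linarith
    · nlinarith
    · nlinarith
  rcases lt_abs.mp hl with h | h
  · exact key l h
  · refine ConePos.of_neg ?_
    convert key (-l) h using 1
    ext i j; fin_cases i <;> fin_cases j <;> simp [inv_neg]

/-! ### Common eigenvectors of mixed type lie in the closure of `H₀` -/

/-- Conjugating by a small lower shear pushes the repelling fixed point `0` of
`t ↦ t / (m² + m b t)` slightly to the left, which opens a common invariant interval of slopes. -/
lemma ConePos.perturbed {m b δ : ℝ} (hm : 0 < m) (hb : 0 < b) (hδ : 0 < δ)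
    (hsmall : b * δ < m⁻¹ - m) :
    ConePos (slopeMat (-δ / 2) (1 / (m * b))) (slopeMatInv (-δ / 2) (1 / (m * b)))
      !![m + b * δ, b; -δ * (m + b * δ) + δ * m⁻¹, -δ * b + m⁻¹] := by
  have hq : 0 < 1 / (m * b) := by positivity
  have hqb : 1 / (m * b) * b = m⁻¹ := by field_simp
  set q := 1 / (m * b) with hqdef
  have hmi : m * m⁻¹ = 1 := mul_inv_cancel₀ hm.ne'
  have hbd : 0 < b * δ := mul_pos hb hδ
  apply ConePos.of_slopes (by linarith)
  · linear_combination hmi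
  · nlinarith
  · nlinarith
  · nlinarith
  · have : q * (m + b * δ + b * q) - (-δ * (m + b * δ) + δ * m⁻¹ + (-δ * b + m⁻¹) * q) =
        (q + δ) * m + (q + δ) * b * δ := by
      linear_combination (q + δ) * hqb
    have : 0 < (q + δ) * m + (q + δ) * b * δ := by positivity
    linarith

lemma mem_closure_H0_of_mixed {A B : SL2} {v : Fin 2 → ℝ} {l m : ℝ} (hv : v ≠ 0)
    (hA : (A : M2).mulVec v = l • v) (hB : (B : M2).mulVec v = m • v)
    (hl : 1 < |l|) (hm : |m| < 1) : (A, B) ∈ closure H0 := by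
  obtain ⟨H, H', hH, hHA, hHv⟩ := exists_eigenbasis hv hA (by
    rw [← sq_abs]; nlinarith)
  have hm0 : m ≠ 0 := by
    rintro rfl
    have := (exists_eigenvector_iff B 0).mp ⟨v, hv, hB⟩
    norm_num at this
  -- the matrix of `B` in the eigenbasis is upper triangular
  have hHB : ∃ b, H' * (B : M2) * H = !![m, b; 0, m⁻¹] := by
    have hH2 : H' * H = 1 := mul_eq_one_comm.mp hH
    have hcol : (H' * (B : M2) * H).mulVec ![1, 0] = m • ![1, 0] := by
      rw [← Matrix.mulVec_mulVec, ← Matrix.mulVec_mulVec, hHv, hB, Matrix.mulVec_smul, ← hHv,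
        Matrix.mulVec_mulVec, hH2, Matrix.one_mulVec]
    have hdet := conj_det hH B
    generalize H' * (B : M2) * H = N at hcol hdet
    have h0 : N 0 0 = m := by simpa using congrFun hcol 0
    have h1 : N 1 0 = 0 := by simpa using congrFun hcol 1
    refine ⟨N 0 1, ?_⟩
    rw [h0, h1] at hdet
    have h2 : N 1 1 = m⁻¹ := by field_simp; linarith
    ext i j; fin_cases i <;> fin_cases j <;> simp [h0, h1, h2]
  obtain ⟨b, hHB⟩ := hHB
  -- changing the sign of the second basis vector, the entry `b` has the sign of `m`
  wlog hmb : 0 ≤ m * b generalizing H H' b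
  · have hJ : (!![1, 0; 0, -1] : M2) * !![1, 0; 0, -1] = 1 := by
      rw [Matrix.mul_fin_two, Matrix.one_fin_two]; simp
    refine this (H * !![1, 0; 0, -1]) (!![1, 0; 0, -1] * H') ?_ ?_ ?_ (-b) ?_ ?_
    · calc H * !![1, 0; 0, -1] * (!![1, 0; 0, -1] * H')
          = H * (!![1, 0; 0, -1] * !![1, 0; 0, -1]) * H' := by simp only [mul_assoc]
        _ = 1 := by rw [hJ, mul_one, hH]
    · calc !![1, 0; 0, -1] * H' * (A : M2) * (H * !![1, 0; 0, -1])
          = !![1, 0; 0, -1] * (H' * (A : M2) * H) * !![1, 0; 0, -1] := by simp only [mul_assoc]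
        _ = _ := by rw [hHA, Matrix.mul_fin_two, Matrix.mul_fin_two]; simp
    · rw [← Matrix.mulVec_mulVec, ← hHv]; congr 1
      ext i; fin_cases i <;> simp
    · calc !![1, 0; 0, -1] * H' * (B : M2) * (H * !![1, 0; 0, -1])
          = !![1, 0; 0, -1] * (H' * (B : M2) * H) * !![1, 0; 0, -1] := by simp only [mul_assoc]
        _ = _ := by rw [hHB, Matrix.mul_fin_two, Matrix.mul_fin_two]; simp
    · linarith
  -- the approximating curve, in the eigenbasis
  let N : ℝ → M2 := fun δ =>
    !![m + (b + m * δ) * δ, b + m * δ;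
       -δ * (m + (b + m * δ) * δ) + δ * m⁻¹, -δ * (b + m * δ) + m⁻¹]
  have hNdet (δ : ℝ) : (H * N δ * H').det = 1 := by
    rw [Matrix.det_mul, Matrix.det_mul, mul_right_comm, ← Matrix.det_mul, hH, Matrix.det_one,
      one_mul, Matrix.det_fin_two]
    simp [N]
    linear_combination mul_inv_cancel₀ hm0
  let γ : ℝ → SL2 := fun δ => ⟨H * N δ * H', hNdet δ⟩
  have hγ0 : γ 0 = B := by
    apply Subtype.ext
    change H * N 0 * H' = B
    have : N 0 = H' * (B : M2) * H := by
      rw [hHB]; simp [N]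
    rw [this]
    calc H * (H' * (B : M2) * H) * H' = (H * H') * B * (H * H') := by simp only [mul_assoc]
      _ = _ := by rw [hH, one_mul, mul_one]
  have hNc : Continuous N := by
    refine continuous_matrix fun i j => ?_
    fin_cases i <;> fin_cases j <;> simp [N] <;> fun_prop
  have hγc : Continuous γ :=
    ((continuous_const.matrix_mul hNc).matrix_mul continuous_const).subtype_mk hNdet
  have hpair : Continuous fun δ : ℝ => (A, γ δ) := continuous_const.prodMk hγc
  have hlim : Filter.Tendsto (fun δ : ℝ => (A, γ δ)) (nhdsWithin 0 (Set.Ioi 0))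
      (nhds (A, B)) := by
    have := hpair.tendsto 0
    rw [hγ0] at this
    exact this.mono_left nhdsWithin_le_nhds
  have hm2 : |m| < |m|⁻¹ := hm.trans ((one_lt_inv₀ (abs_pos.mpr hm0)).mpr hm)
  have hev : ∀ᶠ δ in nhdsWithin (0:ℝ) (Set.Ioi 0), |b + m * δ| * δ < |m|⁻¹ - |m| := by
    have hc : Continuous fun δ : ℝ => |b + m * δ| * δ := by fun_prop
    refine (hc.continuousAt.eventually_lt continuousAt_const ?_).filter_mono nhdsWithin_le_nhds
    simpa using hm2
  refine mem_closure_of_tendsto hlim ?_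
  filter_upwards [hev, self_mem_nhdsWithin] with δ hsmall hδ
  rw [Set.mem_Ioi] at hδ
  have hmb2 : 0 < m * (b + m * δ) := by
    have : 0 < m ^ 2 * δ := by positivity
    nlinarith
  have hq : 0 < 1 / (|m| * |b + m * δ|) := by rw [← abs_mul]; positivity
  have hK := slopeMat_mul_inv (p := -δ / 2) (q := 1 / (|m| * |b + m * δ|)) (by linarith)
  set K := slopeMat (-δ / 2) (1 / (|m| * |b + m * δ|)) with hKdef
  set K' := slopeMatInv (-δ / 2) (1 / (|m| * |b + m * δ|)) with hKdef'
  have hHK : H * K * (K' * H') = 1 := by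
    calc H * K * (K' * H') = H * (K * K') * H' := by simp only [mul_assoc]
      _ = 1 := by rw [hK, mul_one, hH]
  refine mem_H0_of_conePos hHK ?_ ?_
  · apply ConePos.change_basis
    rw [hHA]
    exact ConePos.diag hl (by linarith) hq
  · apply ConePos.change_basis
    have e : H' * (γ δ : M2) * H = N δ := by
      have hH2 : H' * H = 1 := mul_eq_one_comm.mp hH
      calc H' * (H * N δ * H') * H = (H' * H) * N δ * (H' * H) := by simp only [mul_assoc]
        _ = _ := by rw [hH2, one_mul, mul_one]
    rw [e]
    rcases lt_or_gt_of_ne hm0 with hneg | hpos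
    · have hb : b + m * δ < 0 := by
        by_contra! hcon; nlinarith
      rw [abs_of_neg hneg, abs_of_neg hb] at hsmall hKdef hKdef'
      have := ConePos.perturbed (neg_pos.mpr hneg) (neg_pos.mpr hb) hδ hsmall
      refine ConePos.of_neg ?_
      rw [hKdef, hKdef']
      convert this using 1
      ext i j; fin_cases i <;> fin_cases j <;> simp [N, inv_neg] <;> ring
    · have hb : 0 < b + m * δ := by
        by_contra! hcon; nlinarith
      rw [abs_of_pos hpos, abs_of_pos hb] at hsmall hKdef hKdef'
      rw [hKdef, hKdef']
      exact ConePos.perturbed hpos hb hδ hsmall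

lemma swap_mem_closure_H0 {A B : SL2} (h : (B, A) ∈ closure H0) : (A, B) ∈ closure H0 := by
  have := map_mem_closure (f := Prod.swap) continuous_swap h (t := H0) (fun p hp => by
    obtain ⟨I, hI, h1, h2⟩ := hp
    exact ⟨I, hI, h2, h1⟩)
  exact this

/-! ### Straight and twisted pairs -/

/-- Any pair of traces `x = tr A`, `y = tr B`, `z = tr AB` gives
`tr (A B A⁻¹ B⁻¹) - 2 = x² + y² + z² - x y z - 4`; this is also the scalar `(A B - B A)²`. -/
def kap (x y z : ℝ) : ℝ := x ^ 2 + y ^ 2 + z ^ 2 - x * y * z - 4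

lemma exists_neg_of_continuous {f g : ℝ → ℝ} (hf : Continuous f) (hg : Continuous g)
    (hf0 : 0 < f 0) (hg0 : 0 < g 0) : ∃ t < 0, 0 < f t ∧ 0 < g t := by
  have h : ∀ᶠ t in nhdsWithin (0:ℝ) (Set.Iio 0), t < 0 ∧ 0 < f t ∧ 0 < g t := by
    refine Filter.Eventually.and self_mem_nhdsWithin (Filter.Eventually.and ?_ ?_)
    · exact (continuousAt_const.eventually_lt hf.continuousAt hf0).filter_mono nhdsWithin_le_nhds
    · exact (continuousAt_const.eventually_lt hg.continuousAt hg0).filter_mono nhdsWithin_le_nhds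
  obtain ⟨t, h1, h2⟩ := h.exists
  exact ⟨t, h1, h2⟩

lemma exists_pos_of_continuous {f g : ℝ → ℝ} (hf : Continuous f) (hg : Continuous g)
    (hf0 : 0 < f 0) (hg0 : 0 < g 0) : ∃ t > 0, 0 < f t ∧ 0 < g t := by
  obtain ⟨t, h1, h2, h3⟩ := exists_neg_of_continuous (f := fun t => f (-t)) (g := fun t => g (-t))
    (by fun_prop) (by fun_prop) (by simpa) (by simpa)
  exact ⟨-t, by linarith, h2, h3⟩

/-- In an eigenbasis of `A`, with `B` given by `a b c d`, an interval of slopes around the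
attracting direction of `A` that `B` maps strictly inside itself exists unless the fixed points
of `A` and `B` are in twisted position. -/
lemma exists_slopes {a b c d : ℝ} (hdet : a * d - b * c = 1) (ht : 2 < a + d)
    (hb : b = 0 → 1 < a) (hc : c = 0 → 1 < a) (h : 0 ≤ b * c ∨ d ≤ a) :
    ∃ p q : ℝ, p < 0 ∧ 0 < q ∧ 0 < a + b * p ∧ 0 < a + b * q ∧
      p * (a + b * p) < c + d * p ∧ c + d * q < q * (a + b * q) := by
  -- the reflection `t ↦ -t` allows to assume `0 < c`, or `c = 0`
  wlog hc0 : 0 ≤ c generalizing b c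
  · obtain ⟨p, q, h1, h2, h3, h4, h5, h6⟩ := this (b := -b) (c := -c) (by linarith)
      (fun h => hb (by linarith)) (fun h => hc (by linarith)) (by simpa using h) (by linarith)
    exact ⟨-q, -p, by linarith, by linarith, by linarith, by linarith, by linarith, by linarith⟩
  by_cases hb0 : b = 0
  · have ha := hb hb0
    subst hb0
    have had : 0 < a - d := by nlinarith
    have hq : 0 < (c + 1) / (a - d) := by positivity
    have hq2 : (c + 1) / (a - d) * (a - d) = c + 1 := by field_simp
    refine ⟨-((c + 1) / (a - d)), (c + 1) / (a - d), by linarith, hq, by linarith, by linarith,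
      by linarith, by linarith⟩
  rcases hc0.eq_or_lt with hc0 | hc0
  · have ha := hc hc0.symm
    subst hc0
    have had : 0 < a - d := by nlinarith
    obtain ⟨p, hp, hp1, hp2⟩ := exists_neg_of_continuous (f := fun t => a + b * t)
      (g := fun t => a - d + b * t) (by fun_prop) (by fun_prop) (by simp; linarith)
      (by simp; linarith)
    obtain ⟨q, hq, hq1, hq2⟩ := exists_pos_of_continuous (f := fun t => a + b * t)
      (g := fun t => a - d + b * t) (by fun_prop) (by fun_prop) (by simp; linarith)
      (by simp; linarith)
    refine ⟨p, q, hp, hq, hp1, hq1, ?_, ?_⟩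
    · have := mul_neg_of_neg_of_pos hp hp2; linarith
    · have := mul_pos hq hq2; linarith
  have ha : 0 < a := by
    rcases h with h | h
    · by_contra! hn
      nlinarith
    · linarith
  obtain ⟨p, hp, hp1, hp2⟩ := exists_neg_of_continuous (f := fun t => a + b * t)
    (g := fun t => c + d * t - t * (a + b * t)) (by fun_prop) (by fun_prop) (by simpa)
    (by simpa)
  rcases lt_or_gt_of_ne hb0 with hb0 | hb0
  · -- here `d < a`, and `q` is the vertex of the parabola `b t² + (a - d) t - c`
    have hbc : b * c < 0 := mul_neg_of_neg_of_pos hb0 hc0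
    have had : d ≤ a := h.resolve_left (by linarith)
    have hne : a ≠ d := by rintro rfl; nlinarith
    have had : 0 < a - d := by
      rcases had.lt_or_eq with h | h
      · linarith
      · exact absurd h.symm hne
    set q := (a - d) / (2 * -b) with hq
    have hq0 : 0 < q := div_pos had (by linarith)
    have hbq : b * q = -(a - d) / 2 := by rw [hq]; field_simp
    refine ⟨p, q, hp, hq0, hp1, by linarith, by linarith, ?_⟩
    have h1 : (-b) * (q * (a + b * q) - (c + d * q)) = ((a + d) ^ 2 - 4) / 4 := by
      linear_combination (-(b * q) - (a - d) / 2) * hbq - hdet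
    have h2 : 0 < (-b) * (q * (a + b * q) - (c + d * q)) := by rw [h1]; nlinarith
    have := pos_of_mul_pos_right h2 (by linarith)
    linarith
  · set q := 1 + (|a - d| + c) / b with hq
    have h1 : b * q = b + |a - d| + c := by rw [hq]; field_simp; ring
    have hq1 : 1 ≤ q := by
      have : 0 ≤ (|a - d| + c) / b := by positivity
      linarith
    refine ⟨p, q, hp, by linarith, hp1, by nlinarith, by linarith, ?_⟩
    have h3 : 0 < (a - d) + |a - d| + b := by linarith [neg_abs_le (a - d)]
    have h2 := mul_pos (by linarith : 0 < q) h3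
    nlinarith

lemma trace_conj {H H' : M2} (hH : H * H' = 1) (M : M2) : (H' * M * H).trace = M.trace := by
  rw [Matrix.trace_mul_cycle, hH, one_mul]

/-- Two hyperbolic matrices of positive trace, without an eigenvector expanded by one and
contracted by the other, either have a common strictly invariant cone or are twisted. -/
lemma straight_or_twisted {A B : SL2} (hA : 2 < trace2 A) (hB : 2 < trace2 B)
    (hno : ∀ (v : Fin 2 → ℝ) (l m : ℝ), v ≠ 0 → (A : M2).mulVec v = l • v →
      (B : M2).mulVec v = m • v → ¬ ((1 < |l| ∧ |m| < 1) ∨ (1 < |m| ∧ |l| < 1))) :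
    (∃ G G' : M2, G * G' = 1 ∧ ConePos G G' A ∧ ConePos G G' B) ∨
      (0 < kap (trace2 A) (trace2 B) (trace2 (A * B)) ∧
        2 * trace2 (A * B) < trace2 A * trace2 B) := by
  obtain ⟨H, H', l, hl, hH, hHA⟩ := exists_diagonalization hA
  have hH2 : H' * H = 1 := mul_eq_one_comm.mp hH
  have hl0 : 0 < l := by linarith
  have hli : l⁻¹ < 1 := inv_lt_one_of_one_lt₀ hl
  have hli0 : 0 < l⁻¹ := by positivity
  have hll : l * l⁻¹ = 1 := mul_inv_cancel₀ hl0.ne'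
  have hdet := conj_det hH B
  obtain ⟨a, b, c, d, hHB⟩ : ∃ a b c d, H' * (B : M2) * H = !![a, b; c, d] :=
    ⟨_, _, _, _, Matrix.eta_fin_two _⟩
  rw [hHB] at hdet
  simp only [Matrix.of_apply, Matrix.cons_val', Matrix.cons_val_zero, Matrix.cons_val_one,
    Matrix.cons_val_fin_one] at hdet
  have hx : trace2 A = l + l⁻¹ := by
    rw [trace2, ← trace_conj hH, hHA, Matrix.trace_fin_two]; simp
  have hy : trace2 B = a + d := by
    rw [trace2, ← trace_conj hH, hHB, Matrix.trace_fin_two]; simp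
  have hz : trace2 (A * B) = l * a + l⁻¹ * d := by
    rw [trace2, Matrix.SpecialLinearGroup.coe_mul, ← trace_conj hH]
    have : H' * ((A : M2) * (B : M2)) * H = (H' * A * H) * (H' * B * H) := by
      calc H' * ((A : M2) * (B : M2)) * H = H' * A * 1 * B * H := by simp only [mul_assoc, one_mul]
        _ = _ := by rw [← hH]; simp only [mul_assoc]
    rw [this, hHA, hHB, Matrix.mul_fin_two, Matrix.trace_fin_two]; simp
  have heig (M : SL2) (u : Fin 2 → ℝ) (s : ℝ) (h : (H' * (M : M2) * H).mulVec u = s • u) :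
      (M : M2).mulVec (H.mulVec u) = s • H.mulVec u := by
    rw [← Matrix.mulVec_smul, ← h, Matrix.mulVec_mulVec, Matrix.mulVec_mulVec]
    congr 1
    calc (M : M2) * H = (H * H') * M * H := by rw [hH, one_mul]
      _ = _ := by simp only [mul_assoc]
  have hne (u : Fin 2 → ℝ) (hu : u ≠ 0) : H.mulVec u ≠ 0 := by
    intro h
    apply hu
    rw [← Matrix.one_mulVec u, ← hH2, ← Matrix.mulVec_mulVec, h, Matrix.mulVec_zero]
  have hb : b = 0 → 1 < a := by
    intro hb
    by_contra! ha
    subst hb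
    have hd : 1 < d := by linarith
    refine hno (H.mulVec ![0, 1]) l⁻¹ d (hne _ (by simp)) (heig A _ _ ?_) (heig B _ _ ?_)
      (Or.inr ⟨by rw [abs_of_pos] <;> linarith, by rw [abs_of_pos] <;> linarith⟩)
    · rw [hHA]; ext i; fin_cases i <;> simp
    · rw [hHB]; ext i; fin_cases i <;> simp
  have hc : c = 0 → 1 < a := by
    intro hc
    by_contra! ha
    subst hc
    have hd : 1 < d := by linarith
    have ha0 : 0 < a := by nlinarith
    have ha1 : a < 1 := by nlinarith
    refine hno (H.mulVec ![1, 0]) l a (hne _ (by simp)) (heig A _ _ ?_) (heig B _ _ ?_)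
      (Or.inl ⟨by rw [abs_of_pos] <;> linarith, by rw [abs_of_pos] <;> linarith⟩)
    · rw [hHA]; ext i; fin_cases i <;> simp
    · rw [hHB]; ext i; fin_cases i <;> simp
  by_cases hcase : 0 ≤ b * c ∨ d ≤ a
  · left
    obtain ⟨p, q, hp, hq, h1, h2, h3, h4⟩ := exists_slopes hdet (hy ▸ hB) hb hc hcase
    have hpq := hp.trans hq
    refine ⟨H * slopeMat p q, slopeMatInv p q * H', ?_, ConePos.change_basis ?_,
      ConePos.change_basis ?_⟩
    · calc H * slopeMat p q * (slopeMatInv p q * H')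
          = H * (slopeMat p q * slopeMatInv p q) * H' := by simp only [mul_assoc]
        _ = 1 := by rw [slopeMat_mul_inv hpq, mul_one, hH]
    · rw [hHA]; exact ConePos.diag (by rwa [abs_of_pos hl0]) hp hq
    · rw [hHB]; exact ConePos.of_slopes hpq hdet h1 h2 h3 h4
  · right
    push Not at hcase
    obtain ⟨hbc, had⟩ := hcase
    have hs : 0 < l - l⁻¹ := by linarith
    rw [hx, hy, hz]
    constructor
    · have : kap (l + l⁻¹) (a + d) (l * a + l⁻¹ * d) = -(b * c) * (l - l⁻¹) ^ 2 := by
        unfold kap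
        linear_combination (4 - (a + d) ^ 2) * hll - (l - l⁻¹) ^ 2 * hdet
      rw [this]
      have : 0 < -(b * c) := by linarith
      positivity
    · have := mul_pos hs (sub_pos.mpr had)
      nlinarith

/-! ### Ping-pong for three reflections -/

/-- Three anti-symplectic involutions `e 0, e 1, e 2` whose anticommutators `-Q i j` are scalars
less than `-2`. In the quadratic space of traceless matrices they are the normals of three
pairwise disjoint geodesics of the hyperbolic plane, no one separating the two others. -/
structure ReflTriple (e : Fin 3 → M2) (Q : Fin 3 → Fin 3 → ℝ) (ρ : ℝ) : Prop where
  anti : ∀ i j, e i * e j + e j * e i = -(Q i j) • (1 : M2)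
  diag : ∀ i, Q i i = -2
  off : ∀ i j, i ≠ j → 1 + ρ ≤ Q i j
  one_lt : 1 < ρ

/-- The reflection fixing the geodesic with normal `E`. -/
def reflBy (E X : M2) : M2 := -(E * X * E)

/-- `X` is a nonnegative combination of the `e j`, its largest coefficient is the `i`-th one,
and this is at least `k`. -/
def MaxCoef (e : Fin 3 → M2) (i : Fin 3) (k : ℝ) (X : M2) : Prop :=
  ∃ c : Fin 3 → ℝ, (∀ j, 0 ≤ c j) ∧ (∀ j, c j ≤ c i) ∧ k ≤ c i ∧ X = ∑ j, c j • e j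

namespace ReflTriple

variable {e : Fin 3 → M2} {Q : Fin 3 → Fin 3 → ℝ} {ρ : ℝ}

lemma sq (h : ReflTriple e Q ρ) (i : Fin 3) : e i * e i = 1 := by
  have h1 := h.anti i i
  rw [h.diag, neg_neg, ← two_smul ℝ (e i * e i)] at h1
  exact smul_right_injective M2 (two_ne_zero (α := ℝ)) h1

lemma reflBy_basis (h : ReflTriple e Q ρ) (i j : Fin 3) :
    reflBy (e i) (e j) = e j + Q i j • e i := by
  have h1 : e i * e j = -(Q i j) • (1 : M2) - e j * e i := eq_sub_of_add_eq (h.anti i j)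
  rw [reflBy, h1, sub_mul, mul_assoc, h.sq i, smul_mul_assoc, one_mul, mul_one]
  module

lemma reflBy_reflBy (h : ReflTriple e Q ρ) (i : Fin 3) (X : M2) :
    reflBy (e i) (reflBy (e i) X) = X := by
  have := h.sq i
  calc reflBy (e i) (reflBy (e i) X) = (e i * e i) * X * (e i * e i) := by
        simp only [reflBy, mul_assoc, neg_mul, mul_neg, neg_neg]
    _ = X := by rw [this, one_mul, mul_one]

lemma reflBy_sum (h : ReflTriple e Q ρ) (i : Fin 3) (c : Fin 3 → ℝ) :
    reflBy (e i) (∑ j, c j • e j) =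
      ∑ j, Function.update c i (c i + ∑ l, Q i l * c l) j • e j := by
  have h1 : reflBy (e i) (∑ j, c j • e j) = ∑ j, c j • reflBy (e i) (e j) := by
    simp only [reflBy, Finset.mul_sum, Finset.sum_mul, ← Finset.sum_neg_distrib, mul_smul_comm,
      smul_mul_assoc, smul_neg]
  have h2 : ∀ j, Function.update c i (c i + ∑ l, Q i l * c l) j • e j =
      c j • e j + if j = i then (∑ l, Q i l * c l) • e i else 0 := by
    intro j
    by_cases hj : j = i
    · subst hj; simp [add_smul]
    · simp [hj]
  simp only [h1, h2, h.reflBy_basis, smul_add, Finset.sum_add_distrib, Finset.sum_ite_eq',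
    Finset.mem_univ, if_true, Finset.sum_smul, smul_smul]
  congr 1
  exact Finset.sum_congr rfl fun j _ => by rw [mul_comm]

/-- Reflecting in a wall other than the dominant one makes that wall dominant, with gain `ρ`. -/
lemma maxCoef_reflBy (h : ReflTriple e Q ρ) {i j : Fin 3} (hij : i ≠ j) {k : ℝ} {X : M2}
    (hk : 0 ≤ k) (hX : MaxCoef e j k X) : MaxCoef e i (ρ * k) (reflBy (e i) X) := by
  obtain ⟨c, h0, hmax, hkc, rfl⟩ := hX
  have hρ := h.one_lt
  have hge : ρ * c j ≤ c i + ∑ l, Q i l * c l := by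
    have hsum : -2 * c i + (1 + ρ) * c j ≤ ∑ l, Q i l * c l := by
      have h1 : ∑ l, ((if l = i then -2 * c i else 0) + if l = j then (1 + ρ) * c j else 0) ≤
          ∑ l, Q i l * c l := by
        refine Finset.sum_le_sum fun l _ => ?_
        by_cases hl : l = i
        · subst hl; simp [h.diag, hij]
        · have h2 := mul_le_mul_of_nonneg_right (h.off i l (Ne.symm hl)) (h0 l)
          have h3 : 0 ≤ (1 + ρ) * c l := mul_nonneg (by linarith) (h0 l)
          by_cases hl2 : l = j
          · subst hl2; simpa [hl] using h2
          · simp only [hl, hl2, if_false]; linarith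
      simpa [Finset.sum_add_distrib] using h1
    have := hmax i
    linarith
  have hcj : c j ≤ ρ * c j := by nlinarith [h0 j]
  refine ⟨Function.update c i (c i + ∑ l, Q i l * c l), fun l => ?_, fun l => ?_, ?_,
    h.reflBy_sum i c⟩
  · by_cases hl : l = i
    · subst hl; rw [Function.update_self]; linarith [h0 j]
    · rw [Function.update_of_ne hl]; exact h0 l
  · rw [Function.update_self]
    by_cases hl : l = i
    · subst hl; rw [Function.update_self]
    · rw [Function.update_of_ne hl]; linarith [hmax l]
  · rw [Function.update_self]
    exact le_trans (mul_le_mul_of_nonneg_left hkc (by linarith)) hge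

end ReflTriple

/-- Action by conjugation of the letter `y`, when `A = -e₀ e₁` and `B = -e₁ e₂`. -/
def letterAct (e : Fin 3 → M2) (y : Bool × Bool) (X : M2) : M2 :=
  match y with
  | (true, true) => reflBy (e 0) (reflBy (e 1) X)
  | (true, false) => reflBy (e 1) (reflBy (e 0) X)
  | (false, true) => reflBy (e 1) (reflBy (e 2) X)
  | (false, false) => reflBy (e 2) (reflBy (e 1) X)

/-- The region in which a point lands under a reduced word with first (outermost) letter `y`. -/
def Landed (e : Fin 3 → M2) (y : Bool × Bool) (k : ℝ) (X : M2) : Prop :=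
  match y with
  | (true, true) => MaxCoef e 0 k X
  | (true, false) => MaxCoef e 0 k (reflBy (e 1) X)
  | (false, true) => MaxCoef e 2 k (reflBy (e 1) X)
  | (false, false) => MaxCoef e 2 k X

namespace ReflTriple

variable {e : Fin 3 → M2} {Q : Fin 3 → Fin 3 → ℝ} {ρ : ℝ}

lemma weaken (h : ReflTriple e Q ρ) {i : Fin 3} {k : ℝ} {X : M2} (hk : 0 ≤ k)
    (hX : MaxCoef e i (ρ * k) X) : MaxCoef e i k X := by
  obtain ⟨c, h0, hmax, hkc, hX⟩ := hX
  exact ⟨c, h0, hmax, le_trans (by nlinarith [h.one_lt]) hkc, hX⟩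

lemma maxCoef_reflBy' (h : ReflTriple e Q ρ) {i j : Fin 3} (hij : i ≠ j) {k : ℝ} {X : M2}
    (hk : 0 ≤ k) (hX : MaxCoef e j k X) : MaxCoef e i k (reflBy (e i) X) :=
  h.weaken hk (h.maxCoef_reflBy hij hk hX)

lemma landed_letterAct (h : ReflTriple e Q ρ) {x y : Bool × Bool} (hxy : y.1 = x.1 → y.2 = x.2)
    {k : ℝ} (hk : 0 ≤ k) {X : M2} (hX : Landed e x k X) :
    Landed e y (ρ * k) (letterAct e y X) := by
  have h01 : (0 : Fin 3) ≠ 1 := by decide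
  have h02 : (0 : Fin 3) ≠ 2 := by decide
  have h12 : (1 : Fin 3) ≠ 2 := by decide
  obtain ⟨x1, x2⟩ := x
  obtain ⟨y1, y2⟩ := y
  have back {i : Fin 3} (hi : 1 ≠ i) (hX : MaxCoef e i k (reflBy (e 1) X)) :
      MaxCoef e 1 k X := by
    have := h.maxCoef_reflBy' hi hk hX
    rwa [h.reflBy_reflBy] at this
  cases x1 <;> cases x2 <;> cases y1 <;> cases y2 <;>
    simp [Landed, letterAct, h.reflBy_reflBy] at hxy hX ⊢
  -- `x = B⁻¹`
  · exact h.maxCoef_reflBy h12.symm hk (h.maxCoef_reflBy' h12 hk hX)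
  · exact h.maxCoef_reflBy h02 hk hX
  · exact h.maxCoef_reflBy h01 hk (h.maxCoef_reflBy' h12 hk hX)
  -- `x = B`
  · exact h.maxCoef_reflBy h12.symm hk (back h12 hX)
  · exact h.maxCoef_reflBy h01 hk (back h12 hX)
  · exact h.maxCoef_reflBy h02 hk hX
  -- `x = A⁻¹`
  · exact h.maxCoef_reflBy h02.symm hk hX
  · exact h.maxCoef_reflBy h12.symm hk (back h01.symm hX)
  · exact h.maxCoef_reflBy h01 hk (back h01.symm hX)
  -- `x = A`
  · exact h.maxCoef_reflBy h12.symm hk (h.maxCoef_reflBy' h01.symm hk hX)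
  · exact h.maxCoef_reflBy h02.symm hk hX
  · exact h.maxCoef_reflBy h01 hk (h.maxCoef_reflBy' h01.symm hk hX)

lemma landed_start (h : ReflTriple e Q ρ) (y : Bool × Bool) :
    Landed e y (ρ * 1) (letterAct e y (∑ j, e j)) := by
  have hs : ∀ i, MaxCoef e i 1 (∑ j, e j) := fun i => ⟨fun _ => 1, by simp, by simp, by simp, by simp⟩
  have h01 : (0 : Fin 3) ≠ 1 := by decide
  have h12 : (1 : Fin 3) ≠ 2 := by decide
  obtain ⟨y1, y2⟩ := y
  cases y1 <;> cases y2 <;> simp only [Landed, letterAct, h.reflBy_reflBy]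
  · exact h.maxCoef_reflBy h12.symm zero_le_one (h.maxCoef_reflBy' h12 zero_le_one (hs 2))
  · exact h.maxCoef_reflBy h12.symm zero_le_one (hs 1)
  · exact h.maxCoef_reflBy h01 zero_le_one (hs 1)
  · exact h.maxCoef_reflBy h01 zero_le_one (h.maxCoef_reflBy' h12 zero_le_one (hs 2))

lemma landed_word (h : ReflTriple e Q ρ) (y : Bool × Bool) (L : List (Bool × Bool))
    (hL : FreeGroup.IsReduced (y :: L)) :
    Landed e y (ρ ^ (L.length + 1)) ((y :: L).foldr (letterAct e) (∑ j, e j)) := by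
  have hρ : 0 < ρ := by linarith [h.one_lt]
  induction L generalizing y with
  | nil => simpa using h.landed_start y
  | cons x L ih =>
    rw [List.foldr_cons, List.length_cons, pow_succ']
    rw [FreeGroup.isReduced_cons_cons] at hL
    exact h.landed_letterAct hL.1 (by positivity) (ih x hL.2)

lemma exists_maxCoef_of_landed (h : ReflTriple e Q ρ) {y : Bool × Bool} {k : ℝ} (hk : 0 ≤ k)
    {X : M2} (hX : Landed e y k X) : ∃ i, MaxCoef e i k X := by
  obtain ⟨y1, y2⟩ := y
  cases y1 <;> cases y2 <;> simp only [Landed] at hX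
  · exact ⟨_, hX⟩
  · have := h.maxCoef_reflBy' (i := 1) (by decide) hk hX
    rw [h.reflBy_reflBy] at this
    exact ⟨_, this⟩
  · have := h.maxCoef_reflBy' (i := 1) (by decide) hk hX
    rw [h.reflBy_reflBy] at this
    exact ⟨_, this⟩
  · exact ⟨_, hX⟩

end ReflTriple

namespace ReflTriple

variable {e : Fin 3 → M2} {Q : Fin 3 → Fin 3 → ℝ} {ρ : ℝ}

/-- Coefficients are recovered by pairing with commutators:
`tr (e i (e j e k - e k e j))` is alternating in the three indices. -/
lemma exists_coef_bound
    (hD : (e 0 * (e 1 * e 2 - e 2 * e 1)).trace ≠ 0) :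
    ∃ K > 0, ∀ (c : Fin 3 → ℝ) (i : Fin 3), c i ≤ K * opNorm (∑ j, c j • e j) := by
  set D := (e 0 * (e 1 * e 2 - e 2 * e 1)).trace with hDdef
  have hD0 : 0 < |D| := abs_pos.mpr hD
  have key : ∀ i : Fin 3, ∃ Y : M2, ∀ c : Fin 3 → ℝ, ((∑ j, c j • e j) * Y).trace = c i * D := by
    have cyc (X Y Z : M2) : (X * (Y * Z)).trace = (Y * (Z * X)).trace := by
      rw [Matrix.trace_mul_comm, mul_assoc]
    have hz (X Y : M2) : (X * (X * Y)).trace = (X * (Y * X)).trace := cyc X X Y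
    intro i
    fin_cases i
    · refine ⟨e 1 * e 2 - e 2 * e 1, fun c => ?_⟩
      simp only [hDdef, Fin.sum_univ_three, add_mul, smul_mul_assoc, Matrix.trace_add,
        Matrix.trace_smul, mul_sub, Matrix.trace_sub, smul_eq_mul, Fin.zero_eta]
      rw [hz (e 1) (e 2), hz (e 2) (e 1)]
      ring
    · refine ⟨e 2 * e 0 - e 0 * e 2, fun c => ?_⟩
      simp only [hDdef, Fin.sum_univ_three, add_mul, smul_mul_assoc, Matrix.trace_add,
        Matrix.trace_smul, mul_sub, Matrix.trace_sub, smul_eq_mul, Fin.mk_one]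
      rw [hz (e 0) (e 2), hz (e 2) (e 0), cyc (e 0) (e 1) (e 2), ← cyc (e 1) (e 0) (e 2),
        cyc (e 1) (e 0) (e 2), cyc (e 0) (e 2) (e 1), cyc (e 2) (e 1) (e 0)]
      ring
    · refine ⟨e 0 * e 1 - e 1 * e 0, fun c => ?_⟩
      simp only [hDdef, Fin.sum_univ_three, add_mul, smul_mul_assoc, Matrix.trace_add,
        Matrix.trace_smul, mul_sub, Matrix.trace_sub, smul_eq_mul, Fin.reduceFinMk]
      rw [hz (e 0) (e 1), hz (e 1) (e 0), cyc (e 2) (e 0) (e 1), cyc (e 2) (e 1) (e 0),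
        cyc (e 1) (e 0) (e 2)]
      ring
  choose Y hY using key
  refine ⟨∑ i, 2 * opNorm (Y i) / |D| + 1, ?_, fun c i => ?_⟩
  · have : 0 ≤ ∑ i, 2 * opNorm (Y i) / |D| :=
      Finset.sum_nonneg fun i _ => div_nonneg (mul_nonneg two_pos.le (opNorm_nonneg _)) hD0.le
    linarith
  · set X := ∑ j, c j • e j with hX
    have h1 : |c i| * |D| ≤ 2 * (opNorm X * opNorm (Y i)) := by
      rw [← abs_mul, ← hY i c]
      exact (abs_trace_le_opNorm _).trans
        (mul_le_mul_of_nonneg_left (opNorm_mul_le _ _) two_pos.le)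
    have h2 : |c i| ≤ 2 * opNorm (Y i) / |D| * opNorm X := by
      rw [div_mul_eq_mul_div, le_div_iff₀ hD0]
      linarith
    have h3 : 2 * opNorm (Y i) / |D| ≤ ∑ i, 2 * opNorm (Y i) / |D| :=
      Finset.single_le_sum (f := fun i => 2 * opNorm (Y i) / |D|)
        (fun i _ => div_nonneg (mul_nonneg two_pos.le (opNorm_nonneg _)) hD0.le)
        (Finset.mem_univ i)
    have h4 := opNorm_nonneg X
    have h5 := mul_le_mul_of_nonneg_right h3 h4
    linarith [le_abs_self (c i)]

/-- A pair acting as products of the three reflections is group-hyperbolic. -/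
lemma groupHyp (h : ReflTriple e Q ρ) {A B : SL2} (hA : (A : M2) = -(e 0 * e 1))
    (hB : (B : M2) = -(e 1 * e 2))
    (hD : (e 0 * (e 1 * e 2 - e 2 * e 1)).trace ≠ 0) : GroupHyp A B := by
  have hρ := h.one_lt
  obtain ⟨K, hK, hcoef⟩ := exists_coef_bound hD
  obtain ⟨K', hK', hinv⟩ := exists_opNorm_inv_le
  set X₀ := ∑ j, e j with hX₀
  have hA' : ((A⁻¹ : SL2) : M2) = -(e 1 * e 0) := by
    have h1 : (A : M2) * -(e 1 * e 0) = 1 := by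
      rw [hA, neg_mul_neg]
      calc e 0 * e 1 * (e 1 * e 0) = e 0 * (e 1 * e 1) * e 0 := by simp only [mul_assoc]
        _ = 1 := by rw [h.sq, mul_one, h.sq]
    have h2 : ((A⁻¹ : SL2) : M2) * (A : M2) = 1 := by
      rw [← Matrix.SpecialLinearGroup.coe_mul, inv_mul_cancel, Matrix.SpecialLinearGroup.coe_one]
    exact left_inv_eq_right_inv h2 h1
  have hB' : ((B⁻¹ : SL2) : M2) = -(e 2 * e 1) := by
    have h1 : (B : M2) * -(e 2 * e 1) = 1 := by
      rw [hB, neg_mul_neg]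
      calc e 1 * e 2 * (e 2 * e 1) = e 1 * (e 2 * e 2) * e 1 := by simp only [mul_assoc]
        _ = 1 := by rw [h.sq, mul_one, h.sq]
    have h2 : ((B⁻¹ : SL2) : M2) * (B : M2) = 1 := by
      rw [← Matrix.SpecialLinearGroup.coe_mul, inv_mul_cancel, Matrix.SpecialLinearGroup.coe_one]
    exact left_inv_eq_right_inv h2 h1
  let φ : FreeGroup Bool →* SL2 := FreeGroup.lift fun b => if b then A else B
  have hact : ∀ L : List (Bool × Bool), L.foldr (letterAct e) X₀ =
      (φ (FreeGroup.mk L) : M2) * X₀ * (((φ (FreeGroup.mk L))⁻¹ : SL2) : M2) := by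
    intro L
    induction L with
    | nil =>
      have : φ (FreeGroup.mk []) = 1 := by rw [← FreeGroup.one_eq_mk, map_one]
      simp [this]
    | cons y L ih =>
      have hφ : φ (FreeGroup.mk (y :: L)) = φ (FreeGroup.mk [y]) * φ (FreeGroup.mk L) := by
        rw [← map_mul, FreeGroup.mul_mk, List.singleton_append]
      have hy : ∀ X : M2, letterAct e y X =
          (φ (FreeGroup.mk [y]) : M2) * X * (((φ (FreeGroup.mk [y]))⁻¹ : SL2) : M2) := by
        intro X
        obtain ⟨y1, y2⟩ := y
        cases y1 <;> cases y2 <;>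
          simp [φ, FreeGroup.lift_mk, letterAct, reflBy, -Matrix.SpecialLinearGroup.coe_inv, hA, hA',
            hB, hB', mul_assoc]
      rw [List.foldr_cons, ih, hy, hφ, _root_.mul_inv_rev, Matrix.SpecialLinearGroup.coe_mul,
        Matrix.SpecialLinearGroup.coe_mul]
      simp only [mul_assoc]
  set K₂ := K * (opNorm X₀ + 1) * K' with hK₂
  have hK₂0 : 0 < K₂ := by have := opNorm_nonneg X₀; positivity
  have hbound : ∀ g : FreeGroup Bool, g ≠ 1 →
      ρ ^ g.toWord.length ≤ K₂ * opNorm (φ g : M2) ^ 2 := by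
    intro g hg
    obtain ⟨y, L, hyL⟩ : ∃ y L, g.toWord = y :: L :=
      List.exists_cons_of_ne_nil (by rwa [Ne, FreeGroup.toWord_eq_nil_iff])
    have hred : FreeGroup.IsReduced (y :: L) := hyL ▸ FreeGroup.isReduced_toWord
    have hL := h.landed_word y L hred
    obtain ⟨i, c, -, -, hk, hc⟩ := h.exists_maxCoef_of_landed (by positivity) hL
    rw [hact, ← hyL, FreeGroup.mk_toWord] at hc
    rw [hyL, List.length_cons]
    have h1 := hcoef c i
    rw [← hc] at h1
    have h2 : opNorm ((φ g : M2) * X₀ * (((φ g)⁻¹ : SL2) : M2)) ≤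
        opNorm (φ g : M2) * (opNorm X₀ + 1) * (K' * opNorm (φ g : M2)) := by
      have a1 := opNorm_nonneg (φ g : M2)
      have a2 := opNorm_nonneg X₀
      have a3 := opNorm_nonneg (((φ g)⁻¹ : SL2) : M2)
      refine (opNorm_mul_le _ _).trans (mul_le_mul ?_ (hinv _) a3 (by positivity))
      exact (opNorm_mul_le _ _).trans (mul_le_mul_of_nonneg_left (by linarith) a1)
    calc ρ ^ (L.length + 1) ≤ c i := hk
      _ ≤ _ := h1
      _ ≤ K * (opNorm (φ g : M2) * (opNorm X₀ + 1) * (K' * opNorm (φ g : M2))) :=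
          mul_le_mul_of_nonneg_left h2 hK.le
      _ = _ := by rw [hK₂]; ring
  refine ⟨(Real.sqrt K₂)⁻¹, inv_pos.mpr (Real.sqrt_pos.mpr hK₂0), Real.log ρ / 2,
    half_pos (Real.log_pos hρ), fun g hg => ?_⟩
  have h1 := hbound g hg
  have h2 : ((Real.sqrt K₂)⁻¹ * Real.exp (Real.log ρ / 2 * (g.toWord.length : ℝ))) ^ 2 =
      K₂⁻¹ * ρ ^ g.toWord.length := by
    rw [mul_pow, inv_pow, Real.sq_sqrt hK₂0.le, ← Real.exp_nat_mul]
    congr 1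
    rw [show ((2 : ℕ) : ℝ) * (Real.log ρ / 2 * (g.toWord.length : ℝ)) =
      (g.toWord.length : ℝ) * Real.log ρ by push_cast; ring, Real.exp_nat_mul,
      Real.exp_log (by linarith)]
  refine le_of_sq_le_sq ?_ (opNorm_nonneg _)
  rw [h2, inv_mul_le_iff₀ hK₂0]
  exact h1

end ReflTriple

/-! ### The reflections attached to a pair with `tr AB < -2` -/

lemma coe_SL2_inv (A : SL2) : ((A⁻¹ : SL2) : M2) = trace2 A • (1 : M2) - (A : M2) := by
  rw [Matrix.SpecialLinearGroup.coe_inv, trace2]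
  ext i j
  fin_cases i <;> fin_cases j <;>
    simp [Matrix.adjugate_fin_two, Matrix.trace_fin_two]

lemma trace2_mul_eq (A B : SL2) : trace2 (A * B) = (A : M2) 0 0 * (B : M2) 0 0 +
    (A : M2) 0 1 * (B : M2) 1 0 + ((A : M2) 1 0 * (B : M2) 0 1 + (A : M2) 1 1 * (B : M2) 1 1) := by
  simp [trace2, Matrix.trace_fin_two, Matrix.mul_apply, Fin.sum_univ_two]

/-- The commutator `AB - BA` is traceless, so its square is a scalar. -/
lemma commutator_sq (A B : SL2) :
    ((A : M2) * B - (B : M2) * A) * ((A : M2) * B - (B : M2) * A) =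
      kap (trace2 A) (trace2 B) (trace2 (A * B)) • (1 : M2) := by
  have hA := SL2_det A
  have hB := SL2_det B
  rw [trace2_mul_eq]
  simp only [trace2, Matrix.trace_fin_two, kap]
  generalize (A : M2) = A at *
  generalize (B : M2) = B at *
  ext i j
  fin_cases i <;> fin_cases j <;>
    simp [Matrix.mul_apply, Fin.sum_univ_two]
  · linear_combination ((B 0 0 + B 1 1) ^ 2 - 4 * (B 0 0 * B 1 1 - B 0 1 * B 1 0)) * hA +
      ((A 0 0 + A 1 1) ^ 2 - 4) * hB
  · ring
  · ring
  · linear_combination ((B 0 0 + B 1 1) ^ 2 - 4 * (B 0 0 * B 1 1 - B 0 1 * B 1 0)) * hA +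
      ((A 0 0 + A 1 1) ^ 2 - 4) * hB

/-- If `tr A > 2`, `tr B > 2` and `tr AB < -2`, the normals of the three reflections are, up to
sign, `A f`, `f`, `f B` with `f` the normalised commutator `AB - BA`. -/
lemma groupHyp_of_traces {A B : SL2} (hx : 2 < trace2 A) (hy : 2 < trace2 B)
    (hz : trace2 (A * B) < -2) : GroupHyp A B := by
  set x := trace2 A with hxd
  set y := trace2 B with hyd
  set z := trace2 (A * B) with hzd
  have hk : 0 < kap x y z := by
    unfold kap
    have h1 : 0 < x * y * (-z) := by
      have : 0 < -z := by linarith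
      positivity
    nlinarith
  set s := Real.sqrt (kap x y z) with hs
  have hs0 : 0 < s := Real.sqrt_pos.mpr hk
  have hss : s * s = kap x y z := Real.mul_self_sqrt hk.le
  set C : M2 := (A : M2) * B - (B : M2) * A with hC
  have hCC : C * C = kap x y z • (1 : M2) := commutator_sq A B
  have hAi : ((A⁻¹ : SL2) : M2) = x • (1 : M2) - (A : M2) := coe_SL2_inv A
  have hBi : ((B⁻¹ : SL2) : M2) = y • (1 : M2) - (B : M2) := coe_SL2_inv B
  have hA1 : (A : M2) * (x • (1 : M2) - (A : M2)) = 1 := by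
    rw [← hAi, ← Matrix.SpecialLinearGroup.coe_mul, mul_inv_cancel,
      Matrix.SpecialLinearGroup.coe_one]
  have hB1 : (B : M2) * (y • (1 : M2) - (B : M2)) = 1 := by
    rw [← hBi, ← Matrix.SpecialLinearGroup.coe_mul, mul_inv_cancel,
      Matrix.SpecialLinearGroup.coe_one]
  have hABi : (y • (1 : M2) - (B : M2)) * (x • (1 : M2) - (A : M2)) = z • 1 - (A : M2) * B := by
    have := coe_SL2_inv (A * B)
    rwa [_root_.mul_inv_rev, Matrix.SpecialLinearGroup.coe_mul, hAi, hBi,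
      Matrix.SpecialLinearGroup.coe_mul] at this
  have hAC : (A : M2) * C = C * (x • (1 : M2) - (A : M2)) := by
    simp only [hC, hxd, trace2, Matrix.trace_fin_two]
    generalize (A : M2) = A
    generalize (B : M2) = B
    ext i j
    fin_cases i <;> fin_cases j <;> simp [Matrix.mul_apply, Fin.sum_univ_two] <;> ring
  have hCB : C * (B : M2) = (y • (1 : M2) - (B : M2)) * C := by
    simp only [hC, hyd, trace2, Matrix.trace_fin_two]
    generalize (A : M2) = A
    generalize (B : M2) = B
    ext i j
    fin_cases i <;> fin_cases j <;> simp [Matrix.mul_apply, Fin.sum_univ_two] <;> ring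
  set f : M2 := s⁻¹ • C with hf
  have hff : f * f = 1 := by
    rw [hf, smul_mul_smul_comm, hCC, smul_smul, ← hss]
    have : s⁻¹ * s⁻¹ * (s * s) = 1 := by field_simp
    rw [this, one_smul]
  have hAf : (A : M2) * f = f * (x • (1 : M2) - (A : M2)) := by
    rw [hf, mul_smul_comm, hAC, smul_mul_assoc]
  have hfB : f * (B : M2) = (y • (1 : M2) - (B : M2)) * f := by
    rw [hf, smul_mul_assoc, hCB, mul_smul_comm]
  have hfAf : f * ((A : M2) * f) = x • (1 : M2) - (A : M2) := by
    rw [hAf, ← mul_assoc, hff, one_mul]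
  have hfBf : f * (B : M2) * f = y • (1 : M2) - (B : M2) := by
    rw [hfB, mul_assoc, hff, mul_one]
  have h02 : (A : M2) * f * (f * (B : M2)) = (A : M2) * B := by
    calc (A : M2) * f * (f * (B : M2)) = A * (f * f) * B := by simp only [mul_assoc]
      _ = _ := by rw [hff, mul_one]
  have h20 : f * (B : M2) * ((A : M2) * f) = z • 1 - (A : M2) * B := by
    rw [hfB, hAf, ← hABi]
    calc (y • (1 : M2) - (B : M2)) * f * (f * (x • (1 : M2) - (A : M2)))
        = (y • (1 : M2) - (B : M2)) * (f * f) * (x • (1 : M2) - (A : M2)) := by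
          simp only [mul_assoc]
      _ = _ := by rw [hff, mul_one]
  have h00 : (A : M2) * f * ((A : M2) * f) = 1 := by
    rw [mul_assoc, hfAf, hA1]
  have h22 : f * (B : M2) * (f * (B : M2)) = 1 := by
    rw [← mul_assoc, hfBf]
    have : (y • (1 : M2) - (B : M2)) * B = B * (y • (1 : M2) - (B : M2)) := by
      rw [sub_mul, mul_sub, smul_mul_assoc, one_mul, mul_smul_comm, mul_one]
    rw [this, hB1]
  have hAff : (A : M2) * f * f = A := by rw [mul_assoc, hff, mul_one]
  have hffB : f * (f * (B : M2)) = B := by rw [← mul_assoc, hff, one_mul]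
  have h : ReflTriple ![(A : M2) * f, -f, f * (B : M2)]
      ![![-2, x, -z], ![x, -2, y], ![-z, y, -2]] (min (min x y) (-z) - 1) := by
    constructor
    · intro i j
      fin_cases i <;> fin_cases j <;>
        simp only [Fin.zero_eta, Fin.mk_one, Fin.reduceFinMk, Matrix.cons_val, mul_neg, neg_mul,
          neg_neg, h00, h22, h02, h20, hff, hfAf, hfBf, hAff, hffB] <;>
        module
    · intro i; fin_cases i <;> rfl
    · have h1 := min_le_left (min x y) (-z)
      have h2 := min_le_right (min x y) (-z)
      have h3 := min_le_left x y
      have h4 := min_le_right x y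
      intro i j hij
      fin_cases i <;> fin_cases j <;> simp at hij ⊢
    · have : 2 < min (min x y) (-z) := lt_min (lt_min hx hy) (by linarith)
      linarith
  refine h.groupHyp ?_ ?_ ?_
  · simp [hAff]
  · simp [hffB]
  · have h1 : ((A : M2) * f * (-f * (f * (B : M2)) - f * (B : M2) * -f)) =
        (A : M2) * f * (y • (1 : M2) - (B : M2) - B) := by
      rw [neg_mul, hffB, mul_neg, hfBf]
      congr 1
      module
    have h2 : ((A : M2) * C * (y • (1 : M2) - (B : M2) - B)).trace = 2 * kap x y z := by
      have hA := SL2_det A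
      have hB := SL2_det B
      simp only [hC, hyd, hxd, hzd, kap]
      rw [trace2_mul_eq]
      simp only [trace2, Matrix.trace_fin_two]
      generalize (A : M2) = A at *
      generalize (B : M2) = B at *
      simp [Matrix.mul_apply, Fin.sum_univ_two]
      linear_combination 2 * (((B 0 0 + B 1 1) ^ 2 - 4 * (B 0 0 * B 1 1 - B 0 1 * B 1 0)) * hA +
        ((A 0 0 + A 1 1) ^ 2 - 4) * hB)
    simp only [Matrix.cons_val, h1]
    rw [hf, mul_smul_comm, smul_mul_assoc, Matrix.trace_smul, h2]
    exact (smul_pos (inv_pos.mpr hs0) (by positivity)).ne'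

/-! ### Group-hyperbolicity and Nielsen moves -/

lemma GroupHyp.unifHypPair {A B : SL2} (h : GroupHyp A B) : UnifHypPair A B := by
  obtain ⟨C, hC, τ, hτ, hgrow⟩ := h
  refine ⟨C, hC, Real.exp τ, Real.one_lt_exp_iff.mpr hτ, fun w hw => ?_⟩
  set L : List (Bool × Bool) := w.reverse.map fun b => (b, true) with hL
  have hred : FreeGroup.IsReduced L := by
    rw [FreeGroup.IsReduced, hL, List.isChain_map]
    exact (List.pairwise_of_forall (by simp)).isChain
  have hword : (FreeGroup.mk L).toWord = L := by
    rw [FreeGroup.toWord_mk, hred.reduce_eq]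
  have hlen : L.length = w.length := by simp [hL]
  have hne : FreeGroup.mk L ≠ 1 := by
    rw [Ne, ← FreeGroup.toWord_eq_nil_iff, hword, ← List.length_eq_zero_iff, hlen,
      List.length_eq_zero_iff]
    exact hw
  have hprod : FreeGroup.lift (fun b => if b then A else B) (FreeGroup.mk L) =
      pairProd A B w := by
    rw [FreeGroup.lift_mk, hL, List.map_map, pairProd]
    rfl
  have h1 := hgrow _ hne
  rw [hword, hlen, hprod, mul_comm τ, Real.exp_nat_mul] at h1
  exact h1

lemma norm_hom_le {θ : FreeGroup Bool →* FreeGroup Bool}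
    (hθ : ∀ b, (θ (FreeGroup.of b)).norm ≤ 2) (g : FreeGroup Bool) :
    (θ g).norm ≤ 2 * g.norm := by
  have key : ∀ L : List (Bool × Bool), (θ (FreeGroup.mk L)).norm ≤ 2 * L.length := by
    intro L
    induction L with
    | nil => rw [← FreeGroup.one_eq_mk, map_one, FreeGroup.norm_one]; simp
    | cons y L ih =>
      have h1 : FreeGroup.mk (y :: L) = FreeGroup.mk [y] * FreeGroup.mk L := by
        rw [FreeGroup.mul_mk, List.singleton_append]
      have h2 : (θ (FreeGroup.mk [y])).norm ≤ 2 := by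
        obtain ⟨b, s⟩ := y
        cases s
        · have : FreeGroup.mk [(b, false)] = (FreeGroup.of b)⁻¹ := rfl
          rw [this, map_inv, FreeGroup.norm_inv_eq]; exact hθ b
        · exact hθ b
      rw [h1, map_mul, List.length_cons]
      refine (FreeGroup.norm_mul_le _ _).trans ?_
      omega
  have := key g.toWord
  rwa [FreeGroup.mk_toWord] at this

/-- Group-hyperbolicity does not depend on the free basis; here for a change of basis of
length at most two. -/
lemma GroupHyp.of_basis_change {A B A' B' : SL2} {θ ψ : FreeGroup Bool →* FreeGroup Bool}
    (hinv : θ.comp ψ = MonoidHom.id _) (hθ : ∀ b, (θ (FreeGroup.of b)).norm ≤ 2)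
    (hψ : (FreeGroup.lift fun b => if b then A' else B').comp ψ =
      FreeGroup.lift fun b => if b then A else B)
    (h : GroupHyp A' B') : GroupHyp A B := by
  obtain ⟨C, hC, τ, hτ, hgrow⟩ := h
  refine ⟨C, hC, τ / 2, half_pos hτ, fun g hg => ?_⟩
  have hgg : θ (ψ g) = g := DFunLike.congr_fun hinv g
  have hne : ψ g ≠ 1 := by
    intro h1
    rw [h1, map_one] at hgg
    exact hg hgg.symm
  have h1 := hgrow _ hne
  have h2 : FreeGroup.lift (fun b => if b then A' else B') (ψ g) =
      FreeGroup.lift (fun b => if b then A else B) g := DFunLike.congr_fun hψ g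
  rw [h2] at h1
  refine le_trans ?_ h1
  have h3 : (g.toWord.length : ℝ) ≤ 2 * ((ψ g).toWord.length : ℝ) := by
    have := norm_hom_le hθ (ψ g)
    rw [hgg] at this
    exact_mod_cast this
  refine mul_le_mul_of_nonneg_left (Real.exp_le_exp.mpr ?_) hC.le
  nlinarith

lemma GroupHyp.of_mul_left {A B : SL2} (h : GroupHyp (A * B) B) : GroupHyp A B := by
  refine h.of_basis_change (θ := FreeGroup.lift fun b =>
      if b then FreeGroup.of true * FreeGroup.of false else FreeGroup.of false)
    (ψ := FreeGroup.lift fun b =>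
      if b then FreeGroup.of true * (FreeGroup.of false)⁻¹ else FreeGroup.of false) ?_ ?_ ?_
  · ext b; cases b <;> simp
  · intro b
    cases b
    · simp [FreeGroup.norm_of]
    · have := FreeGroup.norm_mul_le (FreeGroup.of true) (FreeGroup.of false)
      simpa [FreeGroup.norm_of] using this
  · refine FreeGroup.ext_hom _ _ fun b => ?_
    cases b <;> simp

lemma GroupHyp.of_mul_right {A B : SL2} (h : GroupHyp A (A * B)) : GroupHyp A B := by
  refine h.of_basis_change (θ := FreeGroup.lift fun b =>
      if b then FreeGroup.of true else FreeGroup.of true * FreeGroup.of false)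
    (ψ := FreeGroup.lift fun b =>
      if b then FreeGroup.of true else (FreeGroup.of true)⁻¹ * FreeGroup.of false) ?_ ?_ ?_
  · ext b; cases b <;> simp
  · intro b
    cases b
    · have := FreeGroup.norm_mul_le (FreeGroup.of true) (FreeGroup.of false)
      simpa [FreeGroup.norm_of] using this
    · simp [FreeGroup.norm_of]
  · refine FreeGroup.ext_hom _ _ fun b => ?_
    cases b <;> simp

/-! ### Trace reduction of twisted pairs -/

lemma continuous_trace2 : Continuous trace2 := by
  have h : Continuous fun A : SL2 => (A : M2) := continuous_subtype_val
  exact h.matrix_trace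

lemma continuous_SL2_mul : Continuous fun p : SL2 × SL2 => p.1 * p.2 := by
  have h : Continuous fun A : SL2 => (A : M2) := continuous_subtype_val
  refine Continuous.subtype_mk
    ((h.comp continuous_fst).matrix_mul (h.comp continuous_snd)) ?_

lemma trace2_mul_mul_right (A B : SL2) :
    trace2 (A * B * B) = trace2 (A * B) * trace2 B - trace2 A := by
  have h := SL2_det B
  rw [trace2_mul_eq, trace2_mul_eq, Matrix.SpecialLinearGroup.coe_mul]
  simp only [trace2, Matrix.trace_fin_two, Matrix.mul_apply, Fin.sum_univ_two]
  linear_combination (-((A : M2) 0 0) - (A : M2) 1 1) * h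

lemma trace2_mul_mul_left (A B : SL2) :
    trace2 (A * (A * B)) = trace2 A * trace2 (A * B) - trace2 B := by
  have h := SL2_det A
  rw [trace2_mul_eq, trace2_mul_eq, Matrix.SpecialLinearGroup.coe_mul]
  simp only [trace2, Matrix.trace_fin_two, Matrix.mul_apply, Fin.sum_univ_two]
  linear_combination (-((B : M2) 0 0) - (B : M2) 1 1) * h

/-- For a twisted pair with all traces greater than `2`, replacing the larger of `x`, `y` by
the other root of the quadratic `kap` decreases it. -/
lemma mul_lt_of_kap_pos {x y z : ℝ} (hy : 2 < y) (hz : 2 < z) (hyx : y ≤ x)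
    (hxy : 2 * z < x * y) (hk : 0 < kap x y z) : y * z < 2 * x := by
  by_contra! hcon
  have key : ∀ x₀, x₀ ≤ x → x + x₀ ≤ y * z → kap x₀ y z ≤ 0 → False := by
    intro x₀ h1 h2 h3
    have h4 : 0 ≤ (x - x₀) * (y * z - (x + x₀)) := mul_nonneg (by linarith) (by linarith)
    have h5 : kap x y z = kap x₀ y z - (x - x₀) * (y * z - (x + x₀)) := by unfold kap; ring
    linarith
  rcases le_or_gt (2 * z) (y ^ 2) with h | h
  · refine key y hyx (by linarith) ?_
    have : 0 ≤ (z - 2) * (y ^ 2 - z - 2) := mul_nonneg (by linarith) (by nlinarith)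
    unfold kap
    nlinarith
  · obtain ⟨w, hw⟩ : ∃ w, w * y = 2 * z := ⟨2 * z / y, by field_simp⟩
    have hy0 : 0 < y := by linarith
    have hwx : w ≤ x := by
      by_contra! hc
      nlinarith
    have hw2 : 2 * w ≤ y * z := by
      have : 2 * w < y * w := by
        have : 0 < w := by
          by_contra! hc
          nlinarith
        nlinarith
      nlinarith
    refine key w hwx (by linarith) ?_
    have hw1 : 2 ≤ w := by
      by_contra! hc
      nlinarith
    have hid : 4 * kap w y z = (y ^ 2 - 4) * (4 - w ^ 2) := by
      unfold kap
      linear_combination (w * y - 2 * z) * hw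
    have : 0 ≤ (y ^ 2 - 4) * (w ^ 2 - 4) := mul_nonneg (by nlinarith) (by nlinarith)
    linarith

lemma two_sqrt_kap_le {x y z : ℝ} (hy : 2 < y) (hz : 2 < z) (h : y * z < 2 * x) :
    2 * Real.sqrt (kap x y z) ≤ 2 * x - y * z := by
  have h1 : Real.sqrt (kap x y z) ≤ (2 * x - y * z) / 2 := by
    refine Real.sqrt_le_iff.mpr ⟨by linarith, ?_⟩
    have : 0 ≤ (y ^ 2 - 4) * (z ^ 2 - 4) := mul_nonneg (by nlinarith) (by nlinarith)
    unfold kap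
    nlinarith
  linarith

/-- A twisted pair all of whose products have `|tr| > 2` is stably group-hyperbolic: Nielsen
moves keep `kap` fixed and decrease `x + y + z` by at least `2 √kap`, until `tr AB < -2`. -/
lemma eventually_groupHyp (n : ℕ) : ∀ A B : SL2, 2 < trace2 A → 2 < trace2 B →
    2 * trace2 (A * B) < trace2 A * trace2 B →
    0 < kap (trace2 A) (trace2 B) (trace2 (A * B)) →
    (∀ M ∈ Subsemigroup.closure ({A, B} : Set SL2), 2 < |trace2 M|) →
    trace2 A + trace2 B + trace2 (A * B) <
      n * (2 * Real.sqrt (kap (trace2 A) (trace2 B) (trace2 (A * B)))) →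
    ∀ᶠ q in nhds (A, B), GroupHyp q.1 q.2 := by
  have base : ∀ A B : SL2, 2 < trace2 A → 2 < trace2 B → trace2 (A * B) < -2 →
      ∀ᶠ q in nhds (A, B), GroupHyp q.1 q.2 := by
    intro A B hx hy hz
    have h1 : Continuous fun q : SL2 × SL2 => trace2 q.1 := continuous_trace2.comp continuous_fst
    have h2 : Continuous fun q : SL2 × SL2 => trace2 q.2 := continuous_trace2.comp continuous_snd
    have h3 : Continuous fun q : SL2 × SL2 => trace2 (q.1 * q.2) :=
      continuous_trace2.comp continuous_SL2_mul
    filter_upwards [h1.continuousAt.eventually (lt_mem_nhds hx),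
      h2.continuousAt.eventually (lt_mem_nhds hy), h3.continuousAt.eventually (gt_mem_nhds hz)]
      with q hq1 hq2 hq3
    exact groupHyp_of_traces hq1 hq2 hq3
  induction n with
  | zero =>
    intro A B hx hy _ _ _ hsum
    refine base A B hx hy ?_
    rw [Nat.cast_zero, zero_mul] at hsum
    linarith
  | succ n ih =>
    intro A B hx hy hxy hk hall hsum
    have hAm : A ∈ Subsemigroup.closure ({A, B} : Set SL2) :=
      Subsemigroup.subset_closure (by simp)
    have hBm : B ∈ Subsemigroup.closure ({A, B} : Set SL2) :=
      Subsemigroup.subset_closure (by simp)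
    rcases lt_abs.mp (hall _ (mul_mem hAm hBm)) with hz | hz
    swap
    · exact base A B hx hy (by linarith)
    push_cast at hsum
    rcases le_total (trace2 B) (trace2 A) with hle | hle
    · have hlt := mul_lt_of_kap_pos hy hz hle hxy hk
      have hdec := two_sqrt_kap_le hy hz hlt
      have hkap : kap (trace2 (A * B)) (trace2 B) (trace2 (A * B * B)) =
          kap (trace2 A) (trace2 B) (trace2 (A * B)) := by
        rw [trace2_mul_mul_right]; unfold kap; ring
      have hsub : Subsemigroup.closure ({A * B, B} : Set SL2) ≤
          Subsemigroup.closure ({A, B} : Set SL2) := by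
        rw [Subsemigroup.closure_le]
        rintro M (rfl | rfl)
        · exact mul_mem hAm hBm
        · exact hBm
      have hev := ih (A * B) B hz hy (by rw [trace2_mul_mul_right]; linarith) (hkap ▸ hk)
        (fun M hM => hall M (hsub hM)) (by rw [hkap, trace2_mul_mul_right]; linarith)
      have hcont : Continuous fun q : SL2 × SL2 => (q.1 * q.2, q.2) :=
        continuous_SL2_mul.prodMk continuous_snd
      exact (hcont.continuousAt.eventually hev).mono fun q hq => hq.of_mul_left
    · have hlt := mul_lt_of_kap_pos (x := trace2 B) (y := trace2 A) hx hz hle (by linarith)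
        (by unfold kap at hk ⊢; linarith)
      have hdec := two_sqrt_kap_le (x := trace2 B) (y := trace2 A) hx hz hlt
      have hsw : kap (trace2 B) (trace2 A) (trace2 (A * B)) =
          kap (trace2 A) (trace2 B) (trace2 (A * B)) := by unfold kap; ring
      rw [hsw] at hdec
      have hkap : kap (trace2 A) (trace2 (A * B)) (trace2 (A * (A * B))) =
          kap (trace2 A) (trace2 B) (trace2 (A * B)) := by
        rw [trace2_mul_mul_left]; unfold kap; ring
      have hsub : Subsemigroup.closure ({A, A * B} : Set SL2) ≤
          Subsemigroup.closure ({A, B} : Set SL2) := by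
        rw [Subsemigroup.closure_le]
        rintro M (rfl | rfl)
        · exact hAm
        · exact mul_mem hAm hBm
      have hev := ih A (A * B) hx hz (by rw [trace2_mul_mul_left]; linarith) (hkap ▸ hk)
        (fun M hM => hall M (hsub hM)) (by rw [hkap, trace2_mul_mul_left]; linarith)
      have hcont : Continuous fun q : SL2 × SL2 => (q.1, q.1 * q.2) :=
        continuous_fst.prodMk continuous_SL2_mul
      exact (hcont.continuousAt.eventually hev).mono fun q hq => hq.of_mul_right

/-! ### The frontier -/

lemma trace2_neg (A : SL2) : trace2 (-A) = -trace2 A := by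
  simp [trace2]

lemma exists_pairProd_of_mem_closure {A B M : SL2}
    (hM : M ∈ Subsemigroup.closure ({A, B} : Set SL2)) :
    ∃ w : List Bool, w ≠ [] ∧ M = pairProd A B w := by
  induction hM using Subsemigroup.closure_induction with
  | mem M hM =>
    rcases hM with rfl | rfl
    · exact ⟨[true], by simp, by simp [pairProd]⟩
    · exact ⟨[false], by simp, by simp [pairProd]⟩
  | mul M N _ _ ihM ihN =>
    obtain ⟨u, hu, rfl⟩ := ihM
    obtain ⟨v, hv, rfl⟩ := ihN
    exact ⟨v ++ u, by simp [hu], by rw [pairProd_append]⟩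

/-- Away from the exceptional cases of the frontier theorem, nearby pairs are uniformly
hyperbolic; here for matrices of positive trace. -/
lemma eventually_unifHypPair {A B : SL2} (hA : 2 < trace2 A) (hB : 2 < trace2 B)
    (hall : ∀ M ∈ Subsemigroup.closure ({A, B} : Set SL2), 2 < |trace2 M|)
    (hno : ∀ (v : Fin 2 → ℝ) (l m : ℝ), v ≠ 0 → (A : M2).mulVec v = l • v →
      (B : M2).mulVec v = m • v → ¬ ((1 < |l| ∧ |m| < 1) ∨ (1 < |m| ∧ |l| < 1))) :
    ∀ᶠ q in nhds (A, B), UnifHypPair q.1 q.2 := by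
  rcases straight_or_twisted hA hB hno with ⟨G, G', hG, hcA, hcB⟩ | ⟨hk, htw⟩
  · have hc : Continuous fun M : SL2 => (M : M2) := continuous_subtype_val
    have h1 := (hc.comp (continuous_fst (X := SL2) (Y := SL2))).continuousAt (x := (A, B))
      |>.eventually ((isOpen_conePos G G').mem_nhds hcA)
    have h2 := (hc.comp (continuous_snd (X := SL2) (Y := SL2))).continuousAt (x := (A, B))
      |>.eventually ((isOpen_conePos G G').mem_nhds hcB)
    filter_upwards [h1, h2] with q hq1 hq2
    exact UnifHypPair.of_conePos hG hq1 hq2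
  · have hs : 0 < 2 * Real.sqrt (kap (trace2 A) (trace2 B) (trace2 (A * B))) := by
      have := Real.sqrt_pos.mpr hk
      linarith
    obtain ⟨n, hn⟩ := exists_nat_gt ((trace2 A + trace2 B + trace2 (A * B)) /
      (2 * Real.sqrt (kap (trace2 A) (trace2 B) (trace2 (A * B)))))
    rw [div_lt_iff₀ hs] at hn
    exact (eventually_groupHyp n A B hA hB htw hk hall hn).mono fun q hq => hq.unifHypPair

lemma exists_sign {A : SL2} (h : 2 < |trace2 A|) : ∃ s : SL2 → SL2, Continuous s ∧
    (∀ M, s M = M ∨ s M = -M) ∧ 2 < trace2 (s A) := by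
  rcases lt_abs.mp h with h | h
  · exact ⟨id, continuous_id, fun M => Or.inl rfl, h⟩
  · refine ⟨fun M => -M, ?_, fun M => Or.inr rfl, by rwa [trace2_neg]⟩
    have hc : Continuous fun M : SL2 => (M : M2) := continuous_subtype_val
    exact hc.neg.subtype_mk _

lemma mulVec_of_sign {A A' : SL2} (h : A' = A ∨ A' = -A) {v : Fin 2 → ℝ} {l : ℝ}
    (hv : (A' : M2).mulVec v = l • v) : ∃ l' : ℝ, |l'| = |l| ∧ (A : M2).mulVec v = l' • v := by
  rcases h with rfl | rfl
  · exact ⟨l, rfl, hv⟩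
  · refine ⟨-l, abs_neg l, ?_⟩
    rw [Matrix.SpecialLinearGroup.coe_neg, Matrix.neg_mulVec] at hv
    rw [neg_smul, ← hv, neg_neg]

/-- **Boundary of `𝓗` for the full 2-shift**: on the frontier of the
hyperbolicity locus, either some product is parabolic, or `A`, `B` are
hyperbolic and share an eigenvector which is expanding for one and contracting
for the other; the latter can only occur on the closure of `H₀`. -/
theorem boundary_full_two_shift (A B : SL2)
    (h : (A, B) ∈ frontier UHpairs) :
    ((∃ w : List Bool, w ≠ [] ∧ |trace2 (pairProd A B w)| = 2) ∨
      (2 < |trace2 A| ∧ 2 < |trace2 B| ∧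
        ∃ v : Fin 2 → ℝ, v ≠ 0 ∧ ∃ l m : ℝ,
          (A : Matrix (Fin 2) (Fin 2) ℝ).mulVec v = l • v ∧
          (B : Matrix (Fin 2) (Fin 2) ℝ).mulVec v = m • v ∧
          ((1 < |l| ∧ |m| < 1) ∨ (1 < |m| ∧ |l| < 1)))) ∧
    ((2 < |trace2 A| ∧ 2 < |trace2 B| ∧
        ∃ v : Fin 2 → ℝ, v ≠ 0 ∧ ∃ l m : ℝ,
          (A : Matrix (Fin 2) (Fin 2) ℝ).mulVec v = l • v ∧
          (B : Matrix (Fin 2) (Fin 2) ℝ).mulVec v = m • v ∧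
          ((1 < |l| ∧ |m| < 1) ∨ (1 < |m| ∧ |l| < 1))) →
      (A, B) ∈ closure H0) := by
  constructor
  · by_contra! hcon
    obtain ⟨hpar, hmix⟩ := hcon
    have hcl : (A, B) ∈ closure UHpairs := frontier_subset_closure h
    have hword : ∀ w : List Bool, w ≠ [] → 2 < |trace2 (pairProd A B w)| := fun w hw =>
      lt_of_le_of_ne (two_le_abs_trace_of_mem_closure hcl hw) (hpar w hw).symm
    have hA : 2 < |trace2 A| := by simpa [pairProd] using hword [true] (by simp)
    have hB : 2 < |trace2 B| := by simpa [pairProd] using hword [false] (by simp)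
    obtain ⟨s, hs, hsgn, hsA⟩ := exists_sign hA
    obtain ⟨t, ht, htgn, htB⟩ := exists_sign hB
    have hev := eventually_unifHypPair hsA htB
      (fun M hM => by
        obtain ⟨w, hw, rfl⟩ := exists_pairProd_of_mem_closure hM
        rcases pairProd_of_sign (hsgn A) (htgn B) w with e | e
        · rw [e]; exact hword w hw
        · rw [e, trace2_neg, abs_neg]; exact hword w hw)
      (fun v l m hv hl hm hlm => by
        obtain ⟨l', hl', hAv⟩ := mulVec_of_sign (hsgn A) hl
        obtain ⟨m', hm', hBv⟩ := mulVec_of_sign (htgn B) hm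
        rw [← hl', ← hm'] at hlm
        have := hmix hA hB v hv l' m' hAv hBv
        rcases hlm with ⟨h1, h2⟩ | ⟨h1, h2⟩
        · exact absurd h2 (not_lt.mpr (this.1 h1))
        · exact absurd h2 (not_lt.mpr (this.2 h1)))
    have hcont : Continuous fun q : SL2 × SL2 => (s q.1, t q.2) :=
      (hs.comp continuous_fst).prodMk (ht.comp continuous_snd)
    have hnhds : ∀ᶠ q in nhds (A, B), q ∈ UHpairs :=
      (hcont.continuousAt.eventually hev).mono fun q hq =>
        UnifHypPair.of_sign (hsgn q.1) (htgn q.2) hq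
    exact h.2 (mem_interior_iff_mem_nhds.mpr hnhds)
  · rintro ⟨-, -, v, hv, l, m, hAv, hBv, ⟨hl, hm⟩ | ⟨hm, hl⟩⟩
    · exact mem_closure_H0_of_mixed hv hAv hBv hl hm
    · exact swap_mem_closure_H0 (mem_closure_H0_of_mixed hv hBv hAv hm hl)
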